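/- arXiv:1602.02202 — 6 statements merged into one kernel-verified Lean document; each statement's English description precedes it below -/
import Mathlib

section
/- For any online learning algorithm (i.e., any strategy that on each round t = 1,...,T outputs a weight vector w_t ∈ R^d as a function of the previously observed examples and losses), for any d ≥ 1, any constants C > 0 and L > 0, and any T ≥ d that is a multiple of d, there exists a sequence of examples x_1,...,x_T ∈ R^d and convex differentiable loss functions ℓ_1,...,ℓ_T : R → R satisfying the Scalar Lipschitz assumption (|ℓ_t′(z)| ≤ L whenever |z| ≤ C) such that the regret R_T = sup_{w ∈ K} Σ_{t=1}^T ℓ_t(w_t^⊤ x_t) − Σ_{t=1}^T ℓ_t(w^⊤ x_t) is at least C·L·√(dT/2). -/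
open Matrix Finset

/-!
The adversary plays coordinate vectors in round-robin order together with linear losses
`y ↦ ± L y`. Its potential is the learner's loss so far, in units of `L`, plus `C` times the
expectation of `∑ j, |final sign sum at j|` if all remaining signs were fair coins. A fair
next sign leaves the mean of the potential unchanged, so one of the two signs does not decrease it.
The potential starts at `C * ∑ j, E|S (n j)|`, where `S` is the simple random walk on `ℤ` and `n j`
the number of rounds spent on coordinate `j`; it ends at `1 / L` times the regret against the point
of the cube `[-C, C]^d` opposing the final sign sums.

Since `E|S (n + 1)| - E|S n| = P(S n = 0)`, the means `E|S n|` are explicit in central binomial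
coefficients, and `16 ^ k ≤ 4 k (2k choose k) ^ 2` gives `E|S n| ≥ √(n / 2)`. For `n ≥ 1` this
survives linear interpolation in `n`, which is what handles a last, incomplete round-robin cycle.
-/

namespace SignAdversary

section RandomWalk

/-- The transition operator of the simple random walk `S` on `ℤ`, acting on functions, so that
`(walkStep ^ n) f s` is the expectation of `f (s + S n)`. -/
noncomputable def walkStep : Module.End ℝ (ℤ → ℝ) where
  toFun f s := (f (s + 1) + f (s - 1)) / 2
  map_add' f g := by
    ext s
    simp only [Pi.add_apply]
    ring
  map_smul' c f := by
    ext s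
    simp only [Pi.smul_apply, smul_eq_mul, RingHom.id_apply]
    ring

lemma walkStep_apply (f : ℤ → ℝ) (s : ℤ) : walkStep f s = (f (s + 1) + f (s - 1)) / 2 := rfl

lemma walkStep_pow_apply (n : ℕ) (f : ℤ → ℝ) (s : ℤ) :
    (walkStep ^ n) f s =
      (∑ ij ∈ antidiagonal n, (n.choose ij.1 : ℝ) * f (s + ij.1 - ij.2)) / 2 ^ n := by
  induction n generalizing s with
  | zero => simp
  | succ n ih =>
    rw [pow_succ', Module.End.mul_apply, walkStep_apply, ih, ih,
      sum_antidiagonal_choose_succ_mul fun i j => f (s + i - j), ← add_div, div_div, ← pow_succ,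
      add_comm]
    congr 2
    · refine sum_congr rfl fun ij _ => ?_
      push_cast
      ring_nf
    · refine sum_congr rfl fun ij hij => ?_
      rw [Nat.choose_symm_of_eq_add (mem_antidiagonal.1 hij).symm]
      push_cast
      ring_nf

/-- `P(S n = 0)` for the simple random walk `S`. -/
noncomputable def returnProb (n : ℕ) : ℝ := (walkStep ^ n) (Pi.single 0 1) 0

lemma returnProb_two_mul (k : ℕ) : returnProb (2 * k) = k.centralBinom / 4 ^ k := by
  rw [returnProb, walkStep_pow_apply, sum_eq_single (k, k)]
  · simp [Nat.centralBinom, pow_mul, show (2 : ℝ) ^ 2 = 4 by norm_num]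
  · rintro ⟨i, j⟩ hij hne
    have hij' : i + j = 2 * k := mem_antidiagonal.1 hij
    have : (0 + i - j : ℤ) ≠ 0 := fun h => hne (by ext <;> simp only <;> omega)
    rw [Pi.single_eq_of_ne this, mul_zero]
  · simp [two_mul]

lemma returnProb_two_mul_add_one (k : ℕ) : returnProb (2 * k + 1) = 0 := by
  rw [returnProb, walkStep_pow_apply, sum_eq_zero, zero_div]
  rintro ⟨i, j⟩ hij
  have hij' : i + j = 2 * k + 1 := mem_antidiagonal.1 hij
  have : (0 + i - j : ℤ) ≠ 0 := by omega
  rw [Pi.single_eq_of_ne this, mul_zero]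

lemma walkStep_abs :
    walkStep (fun s : ℤ => |(s : ℝ)|) = (fun s : ℤ => |(s : ℝ)|) + Pi.single 0 1 := by
  ext s
  rw [walkStep_apply, Pi.add_apply]
  rcases lt_trichotomy s 0 with hs | rfl | hs
  · have : (s : ℝ) ≤ -1 := by exact_mod_cast Int.le_sub_one_of_lt hs
    rw [Pi.single_eq_of_ne hs.ne, abs_of_neg (by linarith : (s : ℝ) < 0)]
    push_cast
    rw [abs_of_nonpos (by linarith), abs_of_nonpos (by linarith)]
    ring
  · norm_num
  · have : (1 : ℝ) ≤ s := by exact_mod_cast hs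
    rw [Pi.single_eq_of_ne hs.ne', abs_of_pos (by linarith : (0 : ℝ) < s)]
    push_cast
    rw [abs_of_nonneg (by linarith), abs_of_nonneg (by linarith)]
    ring

/-- The expectation of `|s + S n|` for the simple random walk `S`. -/
noncomputable def meanAbs (n : ℕ) : ℤ → ℝ := (walkStep ^ n) fun s => |(s : ℝ)|

@[simp]
lemma meanAbs_zero (s : ℤ) : meanAbs 0 s = |(s : ℝ)| := rfl

lemma meanAbs_succ (n : ℕ) (s : ℤ) :
    meanAbs (n + 1) s = (meanAbs n (s + 1) + meanAbs n (s - 1)) / 2 := by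
  rw [meanAbs, pow_succ', Module.End.mul_apply, walkStep_apply, meanAbs]

lemma meanAbs_succ_zero_right (n : ℕ) : meanAbs (n + 1) 0 = meanAbs n 0 + returnProb n := by
  rw [meanAbs, pow_succ, Module.End.mul_apply, walkStep_abs, map_add]
  rfl

lemma returnProb_two_mul_succ (k : ℕ) :
    2 * ((k : ℝ) + 1) * returnProb (2 * (k + 1)) = (2 * k + 1) * returnProb (2 * k) := by
  have h : ((k : ℝ) + 1) * (k + 1).centralBinom = 2 * (2 * k + 1) * k.centralBinom := by
    exact_mod_cast Nat.succ_mul_centralBinom_succ k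
  rw [returnProb_two_mul, returnProb_two_mul, pow_succ]
  field_simp
  linarith

lemma meanAbs_two_mul (k : ℕ) : meanAbs (2 * k) 0 = 2 * k * returnProb (2 * k) := by
  induction k with
  | zero => simp
  | succ k ih =>
    calc meanAbs (2 * (k + 1)) 0
        = meanAbs (2 * k) 0 + returnProb (2 * k) + returnProb (2 * k + 1) := by
          rw [← meanAbs_succ_zero_right, ← meanAbs_succ_zero_right, mul_add_one]
      _ = (2 * k + 1) * returnProb (2 * k) := by
          rw [ih, returnProb_two_mul_add_one]
          ring
      _ = 2 * ↑(k + 1) * returnProb (2 * (k + 1)) := by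
          rw [← returnProb_two_mul_succ]
          push_cast
          ring

lemma one_le_four_mul_returnProb_sq {k : ℕ} (hk : 1 ≤ k) :
    1 ≤ 4 * k * returnProb (2 * k) ^ 2 := by
  induction k, hk using Nat.le_induction with
  | base =>
    rw [returnProb_two_mul]
    norm_num [Nat.centralBinom]
  | succ k _ ih =>
    refine le_of_mul_le_mul_left ?_ (by positivity : (0 : ℝ) < k + 1)
    calc ((k : ℝ) + 1) * 1
        ≤ (k + 1) * (4 * k * returnProb (2 * k) ^ 2) := by gcongr
      _ ≤ ((2 * k + 1) * returnProb (2 * k)) ^ 2 := by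
          nlinarith [sq_nonneg (returnProb (2 * k))]
      _ = (k + 1) * (4 * ↑(k + 1) * returnProb (2 * (k + 1)) ^ 2) := by
          rw [← returnProb_two_mul_succ]
          push_cast
          ring

lemma sqrt_le_meanAbs_two_mul_add {k : ℕ} (hk : 1 ≤ k) {θ : ℝ} (hθ : 0 ≤ θ) :
    √((2 * k + θ) / 2) ≤ meanAbs (2 * k) 0 + θ * returnProb (2 * k) := by
  have hpos : 0 ≤ returnProb (2 * k) := by
    rw [returnProb_two_mul]
    positivity
  rw [meanAbs_two_mul, ← add_mul, Real.sqrt_le_left (by positivity)]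
  nlinarith [one_le_four_mul_returnProb_sq hk, mul_nonneg hθ (sq_nonneg (returnProb (2 * k)))]

lemma sqrt_le_meanAbs_add {n : ℕ} (hn : 1 ≤ n) {θ : ℝ} (hθ₀ : 0 ≤ θ) (hθ₁ : θ ≤ 1) :
    √((n + θ) / 2) ≤ meanAbs n 0 + θ * returnProb n := by
  obtain ⟨k, rfl | rfl⟩ := n.even_or_odd'
  · exact_mod_cast sqrt_le_meanAbs_two_mul_add (by omega : 1 ≤ k) hθ₀
  · have hreturn := returnProb_two_mul_add_one k
    calc √((↑(2 * k + 1) + θ) / 2)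
        ≤ √((2 * ↑(k + 1) + 0) / 2) := by
          refine Real.sqrt_le_sqrt ?_
          push_cast
          linarith
      _ ≤ meanAbs (2 * (k + 1)) 0 + 0 * returnProb (2 * (k + 1)) :=
          sqrt_le_meanAbs_two_mul_add (by omega) le_rfl
      _ = meanAbs (2 * k + 1) 0 + θ * returnProb (2 * k + 1) := by
          rw [mul_add_one, meanAbs_succ_zero_right, hreturn]
          ring

end RandomWalk

section RoundRobin

lemma card_filter_ofNat_eq (d T : ℕ) [NeZero d] (j : Fin d) :
    #{t ∈ range T | Fin.ofNat d t = j} = T / d + if (j : ℕ) < T % d then 1 else 0 := by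
  have h := Nat.count_modEq_card T (NeZero.pos d) j
  rw [Nat.mod_eq_of_lt j.isLt, Nat.count_eq_card_filter_range] at h
  simpa [Fin.ext_iff, Nat.ModEq, Nat.mod_eq_of_lt j.isLt] using h

lemma sum_meanAbs_roundRobin (d T : ℕ) [NeZero d] :
    ∑ j : Fin d, meanAbs #{t ∈ range T | Fin.ofNat d t = j} 0 =
      d * meanAbs (T / d) 0 + ↑(T % d) * returnProb (T / d) := by
  have hterm (j : Fin d) : meanAbs #{t ∈ range T | Fin.ofNat d t = j} 0 =
      meanAbs (T / d) 0 + if (j : ℕ) < T % d then returnProb (T / d) else 0 := by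
    rw [card_filter_ofNat_eq]
    split_ifs
    · rw [meanAbs_succ_zero_right]
    · simp
  have hfilter : {j ∈ range d | j < T % d} = range (T % d) := by
    ext j
    have := Nat.mod_lt T (NeZero.pos d)
    simp only [mem_filter, mem_range]
    omega
  simp_rw [hterm, sum_add_distrib]
  rw [Fin.sum_univ_eq_sum_range fun j => if j < T % d then returnProb (T / d) else 0,
    ← sum_filter, hfilter]
  simp

lemma sqrt_le_sum_meanAbs_roundRobin {d T : ℕ} [NeZero d] (hT : d ≤ T) :
    √(d * T / 2) ≤ ∑ j : Fin d, meanAbs #{t ∈ range T | Fin.ofNat d t = j} 0 := by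
  have hd : (0 : ℝ) < d := by exact_mod_cast NeZero.pos d
  set q := T / d
  set θ : ℝ := ↑(T % d) / d with hθ
  have hrem : (↑(T % d) : ℝ) = d * θ := by
    rw [hθ]
    field_simp
  have hdiv : (T : ℝ) = d * (q + θ) := by
    rw [mul_add, ← hrem]
    exact_mod_cast (Nat.div_add_mod T d).symm
  have hθ₁ : θ ≤ 1 := (div_le_one hd).2 (by exact_mod_cast (Nat.mod_lt T (NeZero.pos d)).le)
  calc √(d * T / 2) = √(d ^ 2 * ((q + θ) / 2)) := by
        rw [hdiv]
        ring_nf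
    _ = d * √((q + θ) / 2) := by rw [Real.sqrt_mul (by positivity), Real.sqrt_sq hd.le]
    _ ≤ d * (meanAbs q 0 + θ * returnProb q) := by
        gcongr
        exact sqrt_le_meanAbs_add (Nat.div_pos hT (NeZero.pos d)) (by positivity) hθ₁
    _ = _ := by
        rw [sum_meanAbs_roundRobin, hrem]
        ring

end RoundRobin

section Adversary

open Function (update update_self update_of_ne)

lemma exists_signs_le (Φ : ℕ → (ℕ → ℤˣ) → ℝ) (T : ℕ)
    (hΦ : ∀ t < T, ∀ ε, Φ t ε ≤ (Φ (t + 1) (update ε t 1) + Φ (t + 1) (update ε t (-1))) / 2) :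
    ∃ ε, Φ 0 1 ≤ Φ T ε := by
  induction T with
  | zero => exact ⟨1, le_rfl⟩
  | succ T ih =>
    obtain ⟨ε, hε⟩ := ih fun t ht => hΦ t (by omega)
    have havg := hΦ T T.lt_succ_self ε
    rcases le_total (Φ (T + 1) (update ε T 1)) (Φ (T + 1) (update ε T (-1))) with h | h
    · exact ⟨update ε T (-1), by linarith⟩
    · exact ⟨update ε T 1, by linarith⟩

lemma sum_mul_update_of_dependsOn {z : ℕ → (ℕ → ℤˣ) → ℝ} (hz : ∀ t, DependsOn (z t) (Set.Iio t))
    (ε : ℕ → ℤˣ) (t : ℕ) (e : ℤˣ) :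
    ∑ u ∈ range (t + 1), (update ε t e u : ℝ) * z u (update ε t e) =
      ∑ u ∈ range t, (ε u : ℝ) * z u ε + e * z t ε := by
  have hlt {u : ℕ} (hu : u < t) : update ε t e u = ε u := update_of_ne hu.ne _ _
  have hz' {u : ℕ} (hu : u ≤ t) : z u (update ε t e) = z u ε :=
    hz u fun _ hv => hlt (lt_of_lt_of_le hv hu)
  rw [sum_range_succ, update_self, hz' le_rfl]
  congr 1
  refine sum_congr rfl fun u hu => ?_
  rw [mem_range] at hu
  rw [hlt hu, hz' hu.le]

variable {ι : Type*} [DecidableEq ι] (J : ℕ → ι)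

lemma card_filter_Ico_succ {t T : ℕ} (ht : t < T) (j : ι) :
    #{u ∈ Ico t T | J u = j} = #{u ∈ Ico (t + 1) T | J u = j} + if J t = j then 1 else 0 := by
  rw [← insert_Ico_add_one_left_eq_Ico ht, filter_insert]
  split_ifs
  · rw [card_insert_of_notMem (by simp)]
  · rfl

/-- The sum of the signs `ε u` played before round `t` at the times `u` with `J u = j`. -/
def signSum (ε : ℕ → ℤˣ) (t : ℕ) (j : ι) : ℤ := ∑ u ∈ range t with J u = j, (ε u : ℤ)

lemma signSum_update (ε : ℕ → ℤˣ) (t : ℕ) (e : ℤˣ) (j : ι) :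
    signSum J (update ε t e) (t + 1) j = signSum J ε t j + if J t = j then (e : ℤ) else 0 := by
  simp only [signSum, sum_filter, sum_range_succ, update_self]
  congr 1
  refine sum_congr rfl fun u hu => ?_
  rw [update_of_ne (mem_range.1 hu).ne]

variable [Fintype ι]

lemma sum_mul_comp_eq_sum_signSum_mul (ε : ℕ → ℤˣ) (T : ℕ) (w : ι → ℝ) :
    ∑ t ∈ range T, (ε t : ℝ) * w (J t) = ∑ j, (signSum J ε T j : ℝ) * w j := by
  rw [← sum_fiberwise _ J]
  refine sum_congr rfl fun j _ => ?_
  rw [signSum, Int.cast_sum, sum_mul]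
  exact sum_congr rfl fun t ht => by rw [(mem_filter.1 ht).2]

/-- The potential of the adversary before round `t` of `T`: the learner's loss `∑ ε u * z u ε` so
far, plus `C` times the expectation of `∑ j, |signSum J ε T j|` when the remaining signs are
independent and uniform. -/
noncomputable def potential (T : ℕ) (C : ℝ) (z : ℕ → (ℕ → ℤˣ) → ℝ) (t : ℕ) (ε : ℕ → ℤˣ) : ℝ :=
  ∑ u ∈ range t, (ε u : ℝ) * z u ε +
    C * ∑ j, meanAbs #{u ∈ Ico t T | J u = j} (signSum J ε t j)

lemma potential_eq_average {z : ℕ → (ℕ → ℤˣ) → ℝ} (hz : ∀ t, DependsOn (z t) (Set.Iio t))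
    (C : ℝ) {t T : ℕ} (ht : t < T) (ε : ℕ → ℤˣ) :
    potential J T C z t ε = (potential J T C z (t + 1) (update ε t 1) +
      potential J T C z (t + 1) (update ε t (-1))) / 2 := by
  set n : ι → ℕ := fun j => #{u ∈ Ico (t + 1) T | J u = j}
  have hmean : ∑ j, meanAbs #{u ∈ Ico t T | J u = j} (signSum J ε t j) =
      (∑ j, meanAbs (n j) (signSum J (update ε t 1) (t + 1) j) +
        ∑ j, meanAbs (n j) (signSum J (update ε t (-1)) (t + 1) j)) / 2 := by
    rw [← sum_add_distrib, sum_div]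
    refine sum_congr rfl fun j _ => ?_
    rw [card_filter_Ico_succ J ht, signSum_update, signSum_update]
    split_ifs
    · exact meanAbs_succ _ _
    · simp [n]
  simp only [potential, sum_mul_update_of_dependsOn hz]
  rw [hmean]
  push_cast
  ring

lemma exists_signs_sum_meanAbs_le {z : ℕ → (ℕ → ℤˣ) → ℝ}
    (hz : ∀ t, DependsOn (z t) (Set.Iio t)) (T : ℕ) (C : ℝ) :
    ∃ ε : ℕ → ℤˣ, C * ∑ j, meanAbs #{t ∈ range T | J t = j} 0 ≤
      ∑ t ∈ range T, (ε t : ℝ) * z t ε + C * ∑ j, |(signSum J ε T j : ℝ)| := by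
  obtain ⟨ε, hε⟩ := exists_signs_le (potential J T C z) T
    fun t ht ε => (potential_eq_average J hz C ht ε).le
  exact ⟨ε, by simpa [potential, signSum] using hε⟩

end Adversary

section Regret

/-- The linear loss of slope `± L` played by the adversary; the sign is a unit of `ℤ`. -/
def signLoss (L : ℝ) (e : ℤˣ) (y : ℝ) : ℝ := L * e * y

lemma convexOn_signLoss (L : ℝ) (e : ℤˣ) : ConvexOn ℝ Set.univ (signLoss L e) :=
  (LinearMap.mul ℝ ℝ (L * e)).convexOn convex_univ

lemma differentiable_signLoss (L : ℝ) (e : ℤˣ) : Differentiable ℝ (signLoss L e) :=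
  differentiable_id.const_mul _

lemma abs_deriv_signLoss (L : ℝ) (e : ℤˣ) (y : ℝ) : |deriv (signLoss L e) y| = |L| := by
  have : deriv (signLoss L e) y = L * e := deriv_const_mul_id _
  rw [this, abs_mul, abs_unit_intCast, mul_one]

lemma exists_signLoss_regret_ge {ι : Type*} [Fintype ι] [DecidableEq ι] (J : ℕ → ι) (T : ℕ)
    {C L : ℝ} (hC : 0 ≤ C) (hL : 0 ≤ L) (alg : ∀ t : ℕ, (Fin t → ℝ → ℝ) → ι → ℝ) :
    ∃ (ε : ℕ → ℤˣ) (w : ι → ℝ), (∀ j, |w j| ≤ C) ∧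
      C * L * ∑ j, meanAbs #{t ∈ range T | J t = j} 0 ≤
        ∑ t ∈ range T, (signLoss L (ε t) (alg t (fun s => signLoss L (ε s)) (J t)) -
          signLoss L (ε t) (w (J t))) := by
  set z : ℕ → (ℕ → ℤˣ) → ℝ := fun t ε => alg t (fun s => signLoss L (ε s)) (J t)
  have hz (t : ℕ) : DependsOn (z t) (Set.Iio t) := fun ε ε' h => by
    have : (fun s : Fin t => signLoss L (ε s)) = fun s : Fin t => signLoss L (ε' s) :=
      funext fun s => by rw [h s s.isLt]
    simp only [z, this]
  obtain ⟨ε, hε⟩ := exists_signs_sum_meanAbs_le J hz T C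
  set w : ι → ℝ := fun j => -C * SignType.sign (signSum J ε T j : ℝ)
  have hw : ∑ t ∈ range T, (ε t : ℝ) * w (J t) = -(C * ∑ j, |(signSum J ε T j : ℝ)|) := by
    rw [sum_mul_comp_eq_sum_signSum_mul, mul_sum, ← sum_neg_distrib]
    refine sum_congr rfl fun j _ => ?_
    rw [← self_mul_sign]
    ring
  refine ⟨ε, w, fun j => ?_, ?_⟩
  · rw [abs_mul, abs_neg, abs_of_nonneg hC]
    refine mul_le_of_le_one_right hC ?_
    cases SignType.sign (signSum J ε T j : ℝ) <;> simp
  · calc C * L * ∑ j, meanAbs #{t ∈ range T | J t = j} 0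
        = L * (C * ∑ j, meanAbs #{t ∈ range T | J t = j} 0) := by ring
      _ ≤ L * (∑ t ∈ range T, (ε t : ℝ) * z t ε - ∑ t ∈ range T, (ε t : ℝ) * w (J t)) := by
          rw [hw, sub_neg_eq_add]
          gcongr
      _ = ∑ t ∈ range T, (signLoss L (ε t) (z t ε) - signLoss L (ε t) (w (J t))) := by
          rw [← sum_sub_distrib, mul_sum]
          exact sum_congr rfl fun t _ => by rw [signLoss, signLoss]; ring

lemma bddAbove_regret {ι : Type*} [Fintype ι] (x : ℕ → ι → ℝ) {T : ℕ} {C : ℝ} {ℓ : ℕ → ℝ → ℝ}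
    (hℓ : ∀ t < T, ContinuousOn (ℓ t) (Set.Icc (-C) C)) (a : ℕ → ℝ) :
    BddAbove {r : ℝ | ∃ w : ι → ℝ, (∀ t < T, |w ⬝ᵥ x t| ≤ C) ∧
      r = ∑ t ∈ range T, (a t - ℓ t (w ⬝ᵥ x t))} := by
  have hbdd (t : ℕ) (ht : t < T) : ∃ b, ∀ y ∈ Set.Icc (-C) C, b ≤ ℓ t y :=
    (isCompact_Icc.bddBelow_image (hℓ t ht)).imp fun b hb y hy => hb ⟨y, hy, rfl⟩
  choose! b hb using hbdd
  refine ⟨∑ t ∈ range T, (a t - b t), ?_⟩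
  rintro _ ⟨w, hw, rfl⟩
  gcongr with t ht
  rw [mem_range] at ht
  exact hb t ht _ (abs_le.1 (hw t ht))

end Regret

end SignAdversary

open SignAdversary in
theorem lower_bound_general
    (d T : ℕ) (hd : 1 ≤ d) (hT : d ≤ T)
    (C L : ℝ) (hC : 0 < C) (hL : 0 < L)
    (alg : ∀ t : ℕ, (Fin t → (Fin d → ℝ)) → (Fin t → (ℝ → ℝ)) → (Fin d → ℝ)) :
    ∃ (x : ℕ → Fin d → ℝ) (ℓ : ℕ → ℝ → ℝ),
      (∀ t < T, ConvexOn ℝ Set.univ (ℓ t)) ∧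
      (∀ t < T, Differentiable ℝ (ℓ t)) ∧
      (∀ t < T, ∀ z : ℝ, |z| ≤ C → |deriv (ℓ t) z| ≤ L) ∧
      C * L * Real.sqrt (d * T / 2) ≤
        sSup { r : ℝ | ∃ w : Fin d → ℝ,
          (∀ t < T, |w ⬝ᵥ x t| ≤ C) ∧
          r = ∑ t ∈ Finset.range T,
              (ℓ t ((alg t (fun s : Fin t => x s.1) (fun s : Fin t => ℓ s.1)) ⬝ᵥ x t)
                - ℓ t (w ⬝ᵥ x t)) } := by
  have : NeZero d := ⟨by omega⟩
  set x : ℕ → Fin d → ℝ := fun t => Pi.single (Fin.ofNat d t) 1 with hx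
  obtain ⟨ε, w, hw, hregret⟩ := exists_signLoss_regret_ge (Fin.ofNat d) T hC.le hL.le
    fun t => alg t fun s => x s
  refine ⟨x, fun t => signLoss L (ε t), fun t _ => convexOn_signLoss L (ε t),
    fun t _ => differentiable_signLoss L (ε t), fun t _ y _ => ?_, ?_⟩
  · rw [abs_deriv_signLoss, abs_of_pos hL]
  calc C * L * √(d * T / 2)
      ≤ C * L * ∑ j : Fin d, meanAbs #{t ∈ range T | Fin.ofNat d t = j} 0 := by
        gcongr
        exact sqrt_le_sum_meanAbs_roundRobin hT
    _ ≤ _ := hregret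
    _ ≤ _ := le_csSup
        (bddAbove_regret x (fun t _ => (differentiable_signLoss L (ε t)).continuous.continuousOn) _)
        ⟨w, fun t _ => by simpa [hx] using hw (Fin.ofNat d t), by simp [hx]⟩

/-- **Lower bound (Theorem 1).** For any online learning algorithm (a strategy `alg`
mapping the history of examples and losses to a weight vector), any `d ≥ 1`, constants
`C, L > 0` and any `T ≥ d` that is a multiple of `d`, there is a sequence of examples
and convex differentiable scalar-Lipschitz losses on which the regret against the
comparator set `K = {w | ∀ t, |wᵀ xₜ| ≤ C}` is at least `C·L·√(dT/2)`. -/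
theorem lower_bound
    (d T : ℕ) (hd : 1 ≤ d) (hT : d ≤ T) (hdvd : d ∣ T)
    (C L : ℝ) (hC : 0 < C) (hL : 0 < L)
    (alg : ∀ t : ℕ, (Fin t → (Fin d → ℝ)) → (Fin t → (ℝ → ℝ)) → (Fin d → ℝ)) :
    ∃ (x : ℕ → Fin d → ℝ) (ℓ : ℕ → ℝ → ℝ),
      (∀ t < T, ConvexOn ℝ Set.univ (ℓ t)) ∧
      (∀ t < T, Differentiable ℝ (ℓ t)) ∧
      (∀ t < T, ∀ z : ℝ, |z| ≤ C → |deriv (ℓ t) z| ≤ L) ∧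
      C * L * Real.sqrt (d * T / 2) ≤
        sSup { r : ℝ | ∃ w : Fin d → ℝ,
          (∀ t < T, |w ⬝ᵥ x t| ≤ C) ∧
          r = ∑ t ∈ Finset.range T,
              (ℓ t ((alg t (fun s : Fin t => x s.1) (fun s : Fin t => ℓ s.1)) ⬝ᵥ x t)
                - ℓ t (w ⬝ᵥ x t)) } :=
  lower_bound_general d T hd hT C L hC hL alg
end

section
/- Let x ∈ R^d with x ≠ 0, u ∈ R^d, C > 0, and let A ∈ R^{d×d} be a symmetric positive definite matrix. Then the unique minimizer of ‖w − u‖_A over the set {w ∈ R^d : |w^⊤ x| ≤ C} is w* = u − (τ_C(u^⊤ x) / (x^⊤ A^{−1} x)) · A^{−1} x, where τ_C(y) = sgn(y)·max{|y| − C, 0} and sgn(a) = 1 if a ≥ 0 and −1 otherwise. -/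
open Matrix

/-- `τ_C(y) = sgn(y) · max(|y| - C, 0)`, where `sgn(a) = 1` if `a ≥ 0` and `-1` otherwise. -/
noncomputable def tauC (C y : ℝ) : ℝ := (if 0 ≤ y then (1 : ℝ) else -1) * max (|y| - C) 0

/-!
The map `y ↦ y - τ_C(y)` clamps `y` to `[-C, C]`, i.e. it is the metric projection of `ℝ` onto that
interval. With `g = A⁻¹ x`, the constraint functional `w ↦ wᵀx` is the `A`-inner product with `g`,
so moving `u` along `g` until its `A`-inner product with `g` is clamped reduces the obtuse-angle
criterion for the projection onto the slab to the one-dimensional criterion for the clamp.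
-/

section SoftThreshold

variable {C y : ℝ}

theorem tauC_of_abs_le (hy : |y| ≤ C) : tauC C y = 0 := by
  rw [tauC, max_eq_right (sub_nonpos.2 hy), mul_zero]

theorem tauC_of_lt (hC : 0 ≤ C) (hy : C < y) : tauC C y = y - C := by
  have hy₀ : 0 ≤ y := hC.trans hy.le
  rw [tauC, if_pos hy₀, abs_of_nonneg hy₀, max_eq_left (sub_nonneg.2 hy.le), one_mul]

theorem tauC_of_lt_neg (hC : 0 ≤ C) (hy : y < -C) : tauC C y = y + C := by
  have hy₀ : y < 0 := by linarith
  rw [tauC, if_neg hy₀.not_ge, abs_of_neg hy₀, max_eq_left (by linarith)]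
  ring

theorem sub_tauC_eq_max_min (hC : 0 ≤ C) (y : ℝ) : y - tauC C y = max (-C) (min C y) := by
  rcases lt_or_ge y (-C) with hlow | hlow
  · rw [tauC_of_lt_neg hC hlow, min_eq_right (by linarith), max_eq_left hlow.le]
    ring
  rcases lt_or_ge C y with hhigh | hhigh
  · rw [tauC_of_lt hC hhigh, min_eq_left hhigh.le, max_eq_right (by linarith)]
    ring
  · rw [tauC_of_abs_le (abs_le.2 ⟨hlow, hhigh⟩), min_eq_right hhigh, max_eq_right hlow, sub_zero]

theorem abs_sub_tauC_le (hC : 0 ≤ C) (y : ℝ) : |y - tauC C y| ≤ C := by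
  rw [sub_tauC_eq_max_min hC, abs_le]
  exact ⟨le_max_left _ _, max_le (neg_le_self hC) (min_le_left _ _)⟩

theorem tauC_mul_sub_sub_tauC_nonpos {z : ℝ} (hz : |z| ≤ C) (y : ℝ) :
    tauC C y * (z - (y - tauC C y)) ≤ 0 := by
  have hC : 0 ≤ C := (abs_nonneg z).trans hz
  obtain ⟨hz_low, hz_high⟩ := abs_le.1 hz
  rcases lt_or_ge y (-C) with hlow | hlow
  · rw [tauC_of_lt_neg hC hlow]
    exact mul_nonpos_of_nonpos_of_nonneg (by linarith) (by linarith)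
  rcases lt_or_ge C y with hhigh | hhigh
  · rw [tauC_of_lt hC hhigh]
    exact mul_nonpos_of_nonneg_of_nonpos (by linarith) (by linarith)
  · rw [tauC_of_abs_le (abs_le.2 ⟨hlow, hhigh⟩), zero_mul]

end SoftThreshold

section BilinForm

theorem bilin_self_add_bilin_self_le {R M : Type*} [CommRing R] [LinearOrder R]
    [IsStrictOrderedRing R] [AddCommGroup M] [Module R M] {B : LinearMap.BilinForm R M}
    (hB : B.IsSymm) {u p w : M} (h : 0 ≤ B (w - p) (p - u)) :
    B (w - p) (w - p) + B (p - u) (p - u) ≤ B (w - u) (w - u) := by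
  have hexpand : B (w - u) (w - u) =
      B (w - p) (w - p) + B (p - u) (p - u) + 2 * B (w - p) (p - u) := by
    rw [← sub_add_sub_cancel w p u, LinearMap.BilinForm.add_left, LinearMap.BilinForm.add_right,
      LinearMap.BilinForm.add_right, hB.eq (p - u) (w - p)]
    ring
  linarith

theorem bilin_sub_div_smul_self {K V : Type*} [Field K] [AddCommGroup V] [Module K V]
    (B : LinearMap.BilinForm K V) {g : V} (hg : B g g ≠ 0) (u : V) (t : K) :
    B (u - (t / B g g) • g) g = B u g - t := by
  rw [map_sub, LinearMap.sub_apply, map_smul, LinearMap.smul_apply, smul_eq_mul,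
    div_mul_cancel₀ t hg]

variable {E : Type*} [AddCommGroup E] [Module ℝ E] {B : LinearMap.BilinForm ℝ E}

theorem sqrt_bilin_sub_le_and_eq_of_obtuse (hB : B.IsSymm) (hpos : B.toQuadraticMap.PosDef)
    {S : Set E} {u p : E} (hp : p ∈ S) (hobtuse : ∀ w ∈ S, 0 ≤ B (w - p) (p - u)) :
    (∀ w ∈ S, √(B (p - u) (p - u)) ≤ √(B (w - u) (w - u))) ∧
      ∀ w ∈ S, (∀ v ∈ S, √(B (w - u) (w - u)) ≤ √(B (v - u) (v - u))) → w = p := by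
  have hpyth : ∀ w ∈ S, B (w - p) (w - p) + B (p - u) (p - u) ≤ B (w - u) (w - u) :=
    fun w hw ↦ bilin_self_add_bilin_self_le hB (hobtuse w hw)
  have hnonneg : ∀ v, 0 ≤ B v v := hpos.nonneg
  refine ⟨fun w hw ↦ Real.sqrt_le_sqrt ?_, fun w hw hmin ↦ ?_⟩
  · linarith [hpyth w hw, hnonneg (w - p)]
  · have hle : B (w - u) (w - u) ≤ B (p - u) (p - u) :=
      (Real.sqrt_le_sqrt_iff (hnonneg _)).1 (hmin p hp)
    by_contra hne
    have hlt : 0 < B (w - p) (w - p) := hpos _ (sub_ne_zero.2 hne)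
    linarith [hpyth w hw]

theorem projection_closed_form_general (hB : B.IsSymm) (hpos : B.toQuadraticMap.PosDef)
    {g : E} (hg : g ≠ 0) (u : E) {C : ℝ} (hC : 0 ≤ C) {wstar : E}
    (hws : wstar = u - (tauC C (B u g) / B g g) • g) :
    |B wstar g| ≤ C ∧
    (∀ w, |B w g| ≤ C → √(B (wstar - u) (wstar - u)) ≤ √(B (w - u) (w - u))) ∧
    (∀ w, |B w g| ≤ C →
      (∀ v, |B v g| ≤ C → √(B (w - u) (w - u)) ≤ √(B (v - u) (v - u))) → w = wstar) := by
  have hgg : 0 < B g g := hpos g hg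
  have hclamp : B wstar g = B u g - tauC C (B u g) := by
    rw [hws, bilin_sub_div_smul_self B hgg.ne']
  have hfeas : |B wstar g| ≤ C := hclamp ▸ abs_sub_tauC_le hC _
  have hobtuse : ∀ w ∈ {w | |B w g| ≤ C}, 0 ≤ B (w - wstar) (wstar - u) := by
    intro w hw
    have hdir : wstar - u = -(tauC C (B u g) / B g g) • g := by rw [hws]; module
    have hangle : B (w - wstar) (wstar - u) =
        -(tauC C (B u g) * (B w g - (B u g - tauC C (B u g)))) / B g g := by
      rw [hdir, map_smul, map_sub, LinearMap.sub_apply, hclamp, smul_eq_mul]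
      ring
    rw [hangle]
    exact div_nonneg (neg_nonneg.2 (tauC_mul_sub_sub_tauC_nonpos hw _)) hgg.le
  exact ⟨hfeas, sqrt_bilin_sub_le_and_eq_of_obtuse hB hpos hfeas hobtuse⟩

end BilinForm

section MatrixForm

variable {n R : Type*} [Fintype n] [DecidableEq n] [CommRing R] {A : Matrix n n R}

theorem isSymm_toBilin'_of_isHermitian [Star R] [TrivialStar R] (hA : A.IsHermitian) :
    A.toBilin'.IsSymm :=
  Matrix.isSymm_toBilin'_iff_isSymm.2 <|
    (conjTranspose_eq_transpose_of_trivial A).symm.trans hA.eq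

theorem posDef_toQuadraticMap_toBilin' [PartialOrder R] [StarRing R] [TrivialStar R]
    (hA : A.PosDef) : A.toBilin'.toQuadraticMap.PosDef :=
  hA.toQuadraticForm'

theorem mulVec_inv_mulVec (hA : IsUnit A) (x : n → R) : A *ᵥ A⁻¹ *ᵥ x = x := by
  rw [mulVec_mulVec, mul_nonsing_inv A ((isUnit_iff_isUnit_det A).1 hA), one_mulVec]

theorem inv_mulVec_ne_zero (hA : IsUnit A) {x : n → R} (hx : x ≠ 0) : A⁻¹ *ᵥ x ≠ 0 :=
  fun h ↦ hx (by rw [← mulVec_inv_mulVec hA x, h, mulVec_zero])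

theorem toBilin'_inv_mulVec (hA : IsUnit A) (w x : n → R) :
    A.toBilin' w (A⁻¹ *ᵥ x) = w ⬝ᵥ x := by
  rw [Matrix.toBilin'_apply', mulVec_inv_mulVec hA]

end MatrixForm

/-- **Projection lemma (Lemma 2).** For `x ≠ 0`, `u ∈ ℝ^d`, `C > 0` and a symmetric positive
definite `A`, the unique minimizer of `‖w - u‖_A = √((w-u)ᵀ A (w-u))` over
`{w : |wᵀx| ≤ C}` is `w* = u - (τ_C(uᵀx) / (xᵀ A⁻¹ x)) • A⁻¹ x`. -/
theorem projection_closed_form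
    (d : ℕ) (x u : Fin d → ℝ) (hx : x ≠ 0) (C : ℝ) (hC : 0 < C)
    (A : Matrix (Fin d) (Fin d) ℝ) (hA : A.PosDef)
    (wstar : Fin d → ℝ)
    (hws : wstar = u - (tauC C (u ⬝ᵥ x) / (x ⬝ᵥ A⁻¹.mulVec x)) • A⁻¹.mulVec x) :
    |wstar ⬝ᵥ x| ≤ C ∧
    (∀ w : Fin d → ℝ, |w ⬝ᵥ x| ≤ C →
      Real.sqrt ((wstar - u) ⬝ᵥ A.mulVec (wstar - u)) ≤
        Real.sqrt ((w - u) ⬝ᵥ A.mulVec (w - u))) ∧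
    (∀ w : Fin d → ℝ, |w ⬝ᵥ x| ≤ C →
      (∀ v : Fin d → ℝ, |v ⬝ᵥ x| ≤ C →
        Real.sqrt ((w - u) ⬝ᵥ A.mulVec (w - u)) ≤
          Real.sqrt ((v - u) ⬝ᵥ A.mulVec (v - u))) →
      w = wstar) := by
  simpa only [toBilin'_inv_mulVec hA.isUnit, Matrix.toBilin'_apply'] using
    projection_closed_form_general (isSymm_toBilin'_of_isHermitian hA.isHermitian)
      (posDef_toQuadraticMap_toBilin' hA) (inv_mulVec_ne_zero hA.isUnit hx) u hC.le
      (by simpa only [toBilin'_inv_mulVec hA.isUnit, dotProduct_comm x] using hws)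
end

section
/- In the setting of the Online Newton algorithm with A_t = α I_d + Σ_{s=1}^t (σ_s + η_s) g_s g_s^⊤, iterates w_1 = 0, u_{t+1} = w_t − A_t^{−1} g_t, w_{t+1} = argmin_{w ∈ K_{t+1}} ‖w − u_{t+1}‖_{A_t}, suppose the losses satisfy the Scalar Lipschitz and Curvature assumptions with σ_t = 0 for all t, and set η_t = √(d / (C² L² t)). Then for every w ∈ K, R_T(w) ≤ (α/2)‖w‖₂² + (CL/2)·√(Td)·ln(1 + Σ_{t=1}^T ‖g_t‖₂² / (α C L √(Td))) + 4 C L √(Td). -/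
open Matrix Finset

/-!
Fix a comparator `v`. Since `A_t = A_{t-1} + c_t g_t g_tᵀ`, expanding `‖w_t - A_t⁻¹ g_t - v‖²_{A_t}`
shows that a Newton step changes the potential `‖w - v‖²_A` by
`c_t ⟪g_t, w_t - v⟫² - 2 ⟪g_t, w_t - v⟫ + g_tᵀ A_t⁻¹ g_t`, and the projection onto a convex set
containing `v` can only decrease it. Summing over the rounds bounds the linearised regret by
`α/2 ‖v‖² + 1/2 ∑ c_t ⟪g_t, w_t - v⟫² + 1/2 ∑ g_tᵀ A_t⁻¹ g_t`.

With `c_t = √(d / (G² t))` and `|⟪g_t, w_t - v⟫| ≤ 2G` the first sum is at most `8 G √(T d)`, as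
`∑ 1/√t ≤ 2√T`. In the second one, inversion is antitone, so the weights may be lowered to the
constant `c_T`; the matrix determinant lemma then bounds each term by an increment of
`log det A_t`, and AM-GM on the eigenvalues bounds `log det A_T` through the trace of `A_T`.
-/

namespace OnlineNewton

section QuadraticForm

variable {n R : Type*} [Fintype n] [CommRing R] {A : Matrix n n R}

theorem dotProduct_mulVec_comm_of_isSymm (hA : A.IsSymm) (v w : n → R) :
    v ⬝ᵥ A *ᵥ w = w ⬝ᵥ A *ᵥ v := by
  rw [dotProduct_mulVec, ← mulVec_transpose, hA.eq, dotProduct_comm]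

theorem add_dotProduct_mulVec_add_self (hA : A.IsSymm) (v w : n → R) :
    (v + w) ⬝ᵥ A *ᵥ (v + w) = v ⬝ᵥ A *ᵥ v + 2 * (v ⬝ᵥ A *ᵥ w) + w ⬝ᵥ A *ᵥ w := by
  simp only [mulVec_add, add_dotProduct, dotProduct_add,
    dotProduct_mulVec_comm_of_isSymm hA w v]
  ring

theorem sub_inv_mulVec_dotProduct_mulVec_self [DecidableEq n] (hA : A.IsSymm)
    (hdet : IsUnit A.det) (v g : n → R) :
    (v - A⁻¹ *ᵥ g) ⬝ᵥ A *ᵥ (v - A⁻¹ *ᵥ g) =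
      v ⬝ᵥ A *ᵥ v - 2 * (g ⬝ᵥ v) + g ⬝ᵥ A⁻¹ *ᵥ g := by
  have hinv : A *ᵥ (A⁻¹ *ᵥ g) = g := by
    rw [mulVec_mulVec, mul_nonsing_inv _ hdet, one_mulVec]
  rw [sub_eq_add_neg, add_dotProduct_mulVec_add_self hA]
  simp only [mulVec_neg, dotProduct_neg, neg_neg, hinv, dotProduct_comm _ g]
  ring

theorem det_sub_smul_vecMulVec [DecidableEq n] (hdet : IsUnit A.det) (c : R) (u v : n → R) :
    (A - c • vecMulVec u v).det = A.det * (1 - c * (v ⬝ᵥ A⁻¹ *ᵥ u)) := by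
  have hrank_one : A - c • vecMulVec u v =
      A + replicateCol Unit (-c • u) * replicateRow Unit v := by
    rw [← vecMulVec_eq, smul_vecMulVec, neg_smul, sub_eq_add_neg]
  rw [hrank_one, det_add_replicateCol_mul_replicateRow hdet, det_unique (n := Unit),
    Matrix.mul_assoc, ← replicateCol_mulVec, Matrix.add_apply,
    replicateRow_mul_replicateCol_apply, mulVec_smul, dotProduct_smul, one_apply_eq,
    smul_eq_mul, neg_mul, ← sub_eq_add_neg]

end QuadraticForm

section RealMatrix

variable {n : Type*} {A B : Matrix n n ℝ}

theorem isSymm_of_isHermitian (hA : A.IsHermitian) : A.IsSymm := by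
  rwa [IsHermitian, conjTranspose_eq_transpose_of_trivial] at hA

variable [Fintype n]

theorem dotProduct_mulVec_self_nonneg (hA : A.PosSemidef) (v : n → ℝ) : 0 ≤ v ⬝ᵥ A *ᵥ v := by
  simpa only [star_trivial] using hA.dotProduct_mulVec_nonneg v

theorem dotProduct_mulVec_nonneg_of_isMinOn (hA : A.IsSymm) {S : Set (n → ℝ)}
    (hS : Convex ℝ S) {p u v : n → ℝ} (hp : p ∈ S) (hv : v ∈ S)
    (hmin : IsMinOn (fun q => (q - u) ⬝ᵥ A *ᵥ (q - u)) S p) :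
    0 ≤ (p - u) ⬝ᵥ A *ᵥ (v - p) := by
  set a := (p - u) ⬝ᵥ A *ᵥ (v - p)
  set b := (v - p) ⬝ᵥ A *ᵥ (v - p)
  have hsegment : ∀ s ∈ Set.Ioc (0 : ℝ) 1, 0 ≤ 2 * a + s * b := by
    intro s hs
    have hle := hmin (hS.add_smul_sub_mem hp hv (Set.Ioc_subset_Icc_self hs))
    simp only [Set.mem_ofPred_eq, add_sub_right_comm, add_dotProduct_mulVec_add_self hA,
      mulVec_smul, dotProduct_smul, smul_dotProduct, smul_eq_mul] at hle
    exact nonneg_of_mul_nonneg_right (a := s) (by linarith) hs.1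
  have hlim : Filter.Tendsto (fun s : ℝ => 2 * a + s * b) (nhdsWithin 0 (Set.Ioi 0))
      (nhds (2 * a)) :=
    (Continuous.tendsto' (by fun_prop) 0 _ (by ring)).mono_left nhdsWithin_le_nhds
  have : 0 ≤ 2 * a := ge_of_tendsto hlim <|
    Filter.mem_of_superset (Ioc_mem_nhdsGT zero_lt_one) hsegment
  linarith

theorem sub_dotProduct_mulVec_le_of_isMinOn (hA : A.PosSemidef) {S : Set (n → ℝ)}
    (hS : Convex ℝ S) {p u v : n → ℝ} (hp : p ∈ S) (hv : v ∈ S)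
    (hmin : IsMinOn (fun q => (q - u) ⬝ᵥ A *ᵥ (q - u)) S p) :
    (p - v) ⬝ᵥ A *ᵥ (p - v) ≤ (u - v) ⬝ᵥ A *ᵥ (u - v) := by
  have hsymm := isSymm_of_isHermitian hA.isHermitian
  have hopt := dotProduct_mulVec_nonneg_of_isMinOn hsymm hS hp hv hmin
  have hsplit := add_dotProduct_mulVec_add_self hsymm (p - u) (v - p)
  rw [sub_add_sub_cancel', ← neg_sub u v, ← neg_sub p v] at hsplit
  rw [← neg_sub p v] at hopt
  simp only [mulVec_neg, neg_dotProduct, dotProduct_neg, neg_neg] at hsplit hopt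
  linarith [dotProduct_mulVec_self_nonneg hA (p - u)]

variable [DecidableEq n]

theorem dotProduct_inv_mulVec_anti (hA : A.PosDef) (hB : B.PosDef) (hBA : (A - B).PosSemidef)
    (g : n → ℝ) : g ⬝ᵥ A⁻¹ *ᵥ g ≤ g ⬝ᵥ B⁻¹ *ᵥ g := by
  set v := A⁻¹ *ᵥ g with hv
  have hAv : v ⬝ᵥ A *ᵥ v = g ⬝ᵥ v := by
    rw [hv, mulVec_mulVec, mul_nonsing_inv _ hA.det_pos.ne'.isUnit, one_mulVec, dotProduct_comm]
  have hBA' := dotProduct_mulVec_self_nonneg hBA v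
  rw [sub_mulVec, dotProduct_sub] at hBA'
  have hsq := dotProduct_mulVec_self_nonneg hB.posSemidef (v - B⁻¹ *ᵥ g)
  rw [sub_inv_mulVec_dotProduct_mulVec_self (isSymm_of_isHermitian hB.isHermitian)
    hB.det_pos.ne'.isUnit] at hsq
  linarith

theorem mul_dotProduct_inv_le_log_det_sub_log_det {c : ℝ} {g : n → ℝ} (hA : 0 < A.det)
    (hA' : 0 < (A - c • vecMulVec g g).det) :
    c * (g ⬝ᵥ A⁻¹ *ᵥ g) ≤ Real.log A.det - Real.log (A - c • vecMulVec g g).det := by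
  rw [det_sub_smul_vecMulVec hA.ne'.isUnit] at hA' ⊢
  have hpos := pos_of_mul_pos_right hA' hA.le
  rw [Real.log_mul hA.ne' hpos.ne']
  linarith [Real.log_le_sub_one_of_pos hpos]

theorem log_det_le_card_mul_log_trace_div_card (hA : A.PosDef) :
    Real.log A.det ≤ Fintype.card n * Real.log (A.trace / Fintype.card n) := by
  cases isEmpty_or_nonempty n
  · simp
  have hcard : (0 : ℝ) < Fintype.card n := by exact_mod_cast Fintype.card_pos
  have hdet : A.det = ∏ i, hA.1.eigenvalues i := by simpa using hA.1.det_eq_prod_eigenvalues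
  have htrace : A.trace = ∑ i, hA.1.eigenvalues i := by
    simpa using hA.1.trace_eq_sum_eigenvalues
  have hjensen := strictConcaveOn_log_Ioi.concaveOn.le_map_sum (t := univ)
    (w := fun _ : n => (Fintype.card n : ℝ)⁻¹) (p := hA.1.eigenvalues)
    (fun _ _ => by positivity) (by simp) (fun i _ => hA.eigenvalues_pos i)
  simp only [smul_eq_mul, ← mul_sum] at hjensen
  rw [hdet, htrace, Real.log_prod fun i _ => (hA.eigenvalues_pos i).ne', div_eq_inv_mul]
  exact (inv_mul_le_iff₀ hcard).1 hjensen

end RealMatrix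

section RegularizedGram

variable {n : Type*} {α : ℝ} {c : ℕ → ℝ} {g : ℕ → n → ℝ} {t T : ℕ}

theorem posSemidef_sum_smul_vecMulVec_self [Finite n] (hc : ∀ s ∈ Icc 1 t, 0 ≤ c s) :
    (∑ s ∈ Icc 1 t, c s • vecMulVec (g s) (g s)).PosSemidef :=
  posSemidef_sum _ fun s hs => (posSemidef_vecMulVec_self_star (g s)).smul (hc s hs)

variable [DecidableEq n]

/-- The matrix `α I + ∑_{s=1}^t c_s g_s g_sᵀ`, which is `A_t` of Online Newton for
`c_s = σ_s + η_s`. -/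
def regularizedGram (α : ℝ) (c : ℕ → ℝ) (g : ℕ → n → ℝ) (t : ℕ) : Matrix n n ℝ :=
  α • 1 + ∑ s ∈ Icc 1 t, c s • vecMulVec (g s) (g s)

theorem regularizedGram_zero : regularizedGram α c g 0 = α • 1 := by
  simp [regularizedGram]

theorem regularizedGram_succ :
    regularizedGram α c g (t + 1) =
      regularizedGram α c g t + c (t + 1) • vecMulVec (g (t + 1)) (g (t + 1)) := by
  rw [regularizedGram, regularizedGram, sum_Icc_succ_top (by omega), add_assoc]

theorem posDef_regularizedGram [Finite n] (hα : 0 < α) (hc : ∀ s ∈ Icc 1 t, 0 ≤ c s) :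
    (regularizedGram α c g t).PosDef :=
  (PosDef.one.smul hα).add_posSemidef (posSemidef_sum_smul_vecMulVec_self hc)

theorem posSemidef_regularizedGram_sub [Finite n] {b : ℕ → ℝ}
    (hbc : ∀ s ∈ Icc 1 t, b s ≤ c s) :
    (regularizedGram α c g t - regularizedGram α b g t).PosSemidef := by
  rw [regularizedGram, regularizedGram, add_sub_add_left_eq_sub, ← sum_sub_distrib]
  simp only [← sub_smul]
  exact posSemidef_sum_smul_vecMulVec_self fun s hs => sub_nonneg.2 (hbc s hs)

variable [Fintype n]

theorem trace_regularizedGram :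
    (regularizedGram α c g t).trace =
      α * Fintype.card n + ∑ s ∈ Icc 1 t, c s * (g s ⬝ᵥ g s) := by
  simp [regularizedGram, trace_add, trace_sum, trace_smul, trace_vecMulVec]

theorem sum_mul_dotProduct_inv_le_log_det_sub (hα : 0 < α) (hc : ∀ t ∈ Icc 1 T, 0 ≤ c t) :
    ∑ t ∈ Icc 1 T, c t * (g t ⬝ᵥ (regularizedGram α c g t)⁻¹ *ᵥ g t) ≤
      Real.log (regularizedGram α c g T).det - Fintype.card n * Real.log α := by
  induction T with
  | zero => simp [regularizedGram_zero]
  | succ T ih =>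
    have hc' : ∀ t ∈ Icc 1 T, 0 ≤ c t := fun t ht =>
      hc t (Icc_subset_Icc_right T.le_succ ht)
    have hsub := eq_sub_of_add_eq (regularizedGram_succ (α := α) (c := c) (g := g) (t := T)).symm
    have hincr := mul_dotProduct_inv_le_log_det_sub_log_det (posDef_regularizedGram hα hc).det_pos
      (hsub ▸ (posDef_regularizedGram (g := g) hα hc').det_pos)
    rw [← hsub] at hincr
    rw [sum_Icc_succ_top (by omega)]
    linarith [ih hc']

theorem sum_mul_dotProduct_inv_le_card_mul_log (hα : 0 < α) (hc : ∀ t ∈ Icc 1 T, 0 ≤ c t) :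
    ∑ t ∈ Icc 1 T, c t * (g t ⬝ᵥ (regularizedGram α c g t)⁻¹ *ᵥ g t) ≤
      Fintype.card n *
        Real.log (1 + (∑ t ∈ Icc 1 T, c t * (g t ⬝ᵥ g t)) / (α * Fintype.card n)) := by
  cases isEmpty_or_nonempty n
  · simp
  have hsum : 0 ≤ ∑ t ∈ Icc 1 T, c t * (g t ⬝ᵥ g t) := sum_nonneg fun t ht =>
    mul_nonneg (hc t ht) (dotProduct_star_self_nonneg (g t))
  have hlogdet :=
    log_det_le_card_mul_log_trace_div_card (posDef_regularizedGram (g := g) hα hc)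
  have hfactor : (regularizedGram α c g T).trace / Fintype.card n =
      α * (1 + (∑ t ∈ Icc 1 T, c t * (g t ⬝ᵥ g t)) / (α * Fintype.card n)) := by
    rw [trace_regularizedGram]
    field_simp
  rw [hfactor, Real.log_mul hα.ne' (by positivity), mul_add] at hlogdet
  linarith [sum_mul_dotProduct_inv_le_log_det_sub (g := g) hα hc]

theorem mul_sum_dotProduct_inv_le_of_le {b : ℝ} (hα : 0 < α) (hb : 0 ≤ b)
    (hbc : ∀ t ∈ Icc 1 T, b ≤ c t) :
    b * ∑ t ∈ Icc 1 T, g t ⬝ᵥ (regularizedGram α c g t)⁻¹ *ᵥ g t ≤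
      Fintype.card n *
        Real.log (1 + b * (∑ t ∈ Icc 1 T, g t ⬝ᵥ g t) / (α * Fintype.card n)) := by
  have hconst := sum_mul_dotProduct_inv_le_card_mul_log (c := fun _ => b) (g := g) (T := T) hα
    fun _ _ => hb
  rw [← mul_sum, ← mul_sum] at hconst
  refine le_trans (mul_le_mul_of_nonneg_left (sum_le_sum fun t ht => ?_) hb) hconst
  have hbc' : ∀ s ∈ Icc 1 t, b ≤ c s := fun s hs =>
    hbc s (Icc_subset_Icc_right (mem_Icc.1 ht).2 hs)
  exact dotProduct_inv_mulVec_anti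
    (posDef_regularizedGram hα fun s hs => hb.trans (hbc' s hs))
    (posDef_regularizedGram hα fun _ _ => hb) (posSemidef_regularizedGram_sub hbc') (g t)

theorem newton_step_dotProduct_mulVec_self (hα : 0 < α) (hc : ∀ s ∈ Icc 1 (t + 1), 0 ≤ c s)
    (w v : n → ℝ) :
    (w - (regularizedGram α c g (t + 1))⁻¹ *ᵥ g (t + 1) - v) ⬝ᵥ regularizedGram α c g (t + 1) *ᵥ
        (w - (regularizedGram α c g (t + 1))⁻¹ *ᵥ g (t + 1) - v) =
      (w - v) ⬝ᵥ regularizedGram α c g t *ᵥ (w - v)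
        + c (t + 1) * (g (t + 1) ⬝ᵥ (w - v)) ^ 2 - 2 * (g (t + 1) ⬝ᵥ (w - v))
        + g (t + 1) ⬝ᵥ (regularizedGram α c g (t + 1))⁻¹ *ᵥ g (t + 1) := by
  have hA := posDef_regularizedGram (g := g) hα hc
  have hrank_one : (w - v) ⬝ᵥ regularizedGram α c g (t + 1) *ᵥ (w - v) =
      (w - v) ⬝ᵥ regularizedGram α c g t *ᵥ (w - v)
        + c (t + 1) * (g (t + 1) ⬝ᵥ (w - v)) ^ 2 := by
    rw [regularizedGram_succ, add_mulVec, dotProduct_add, smul_mulVec, vecMulVec_mulVec,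
      op_smul_eq_smul, dotProduct_smul, dotProduct_smul, smul_eq_mul, smul_eq_mul,
      dotProduct_comm (w - v) (g (t + 1)), sq]
  rw [sub_right_comm, sub_inv_mulVec_dotProduct_mulVec_self (isSymm_of_isHermitian hA.isHermitian)
    hA.det_pos.ne'.isUnit, hrank_one]

end RegularizedGram

section StepSizes

theorem sum_one_div_sqrt_le (T : ℕ) : ∑ t ∈ Icc 1 T, 1 / √(t : ℝ) ≤ 2 * √(T : ℝ) := by
  induction T with
  | zero => simp
  | succ T ih =>
    rw [sum_Icc_succ_top (by omega)]
    have hincr : 1 / √((T + 1 : ℕ) : ℝ) ≤ 2 * √((T + 1 : ℕ) : ℝ) - 2 * √(T : ℝ) := by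
      have hT := Real.sq_sqrt (Nat.cast_nonneg (α := ℝ) T)
      have hsucc := Real.sq_sqrt (Nat.cast_nonneg (α := ℝ) (T + 1))
      rw [div_le_iff₀ (Real.sqrt_pos.2 (by positivity))]
      push_cast at hsucc ⊢
      linarith [sq_nonneg (√((T : ℝ) + 1) - √(T : ℝ))]
    linarith

theorem sum_sqrt_div_le {G : ℝ} (hG : 0 < G) (d T : ℕ) :
    ∑ t ∈ Icc 1 T, √((d : ℝ) / (G ^ 2 * t)) ≤ 2 * √((T : ℝ) * d) / G := by
  calc ∑ t ∈ Icc 1 T, √((d : ℝ) / (G ^ 2 * t))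
      = √(d : ℝ) / G * ∑ t ∈ Icc 1 T, 1 / √(t : ℝ) := by
        rw [mul_sum]
        refine sum_congr rfl fun t _ => ?_
        rw [Real.sqrt_div (by positivity), Real.sqrt_mul (by positivity), Real.sqrt_sq hG.le,
          div_mul_div_comm, mul_one]
    _ ≤ √(d : ℝ) / G * (2 * √(T : ℝ)) := by
        gcongr
        exact sum_one_div_sqrt_le T
    _ = 2 * √((T : ℝ) * d) / G := by
        rw [Real.sqrt_mul (by positivity)]
        ring

theorem sqrt_div_eq_div_mul_sqrt {G a b : ℝ} (hG : 0 < G) (ha : 0 < a) (hb : 0 < b) :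
    √(a / (G ^ 2 * b)) = a / (G * √(b * a)) := by
  rw [Real.sqrt_div ha.le, Real.sqrt_mul (by positivity), Real.sqrt_mul hb.le,
    Real.sqrt_sq hG.le]
  field_simp
  exact Real.sq_sqrt ha.le

theorem sum_dotProduct_inv_le_mul_log {n : Type*} [Fintype n] [DecidableEq n] {α G : ℝ}
    {c : ℕ → ℝ} {T : ℕ} (hα : 0 < α) (hG : 0 < G)
    (hc : ∀ t ∈ Icc 1 T, c t = √((Fintype.card n : ℝ) / (G ^ 2 * t))) (g : ℕ → n → ℝ) :
    ∑ t ∈ Icc 1 T, g t ⬝ᵥ (regularizedGram α c g t)⁻¹ *ᵥ g t ≤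
      G * √((T : ℝ) * Fintype.card n) * Real.log
        (1 + (∑ t ∈ Icc 1 T, g t ⬝ᵥ g t) / (α * (G * √((T : ℝ) * Fintype.card n)))) := by
  cases isEmpty_or_nonempty n
  · simp
  obtain rfl | hT := T.eq_zero_or_pos
  · simp
  have hT' : (0 : ℝ) < T := by exact_mod_cast hT
  have hcard : (0 : ℝ) < Fintype.card n := by exact_mod_cast Fintype.card_pos
  have hmin : ∀ t ∈ Icc 1 T, √((Fintype.card n : ℝ) / (G ^ 2 * T)) ≤ c t := by
    intro t ht
    obtain ⟨h1t, htT⟩ := mem_Icc.1 ht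
    rw [hc t ht]
    gcongr
  have hpot := mul_sum_dotProduct_inv_le_of_le (g := g) hα (Real.sqrt_nonneg _) hmin
  rw [sqrt_div_eq_div_mul_sqrt hG hcard hT'] at hpot
  set D := G * √((T : ℝ) * Fintype.card n)
  have hD : 0 < D := by positivity
  have hratio (S : ℝ) : Fintype.card n / D * S / (α * Fintype.card n) = S / (α * D) := by
    field_simp
  rw [hratio, div_mul_eq_mul_div, div_le_iff₀ hD, mul_assoc] at hpot
  linarith [le_of_mul_le_mul_left hpot hcard]

end StepSizes

section Iterates

variable {n : Type*} [Fintype n] [DecidableEq n]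

/-- `w 1, …, w T` are the iterates of Online Newton with gradients `g` and weights `c = σ + η`:
each Newton step `w t - A_t⁻¹ g t` is followed by a projection onto `S (t + 1)` in the norm
`‖·‖_{A_t}`. The projections stop at `S T`, so `w (T + 1)` is unconstrained. -/
structure IsOnlineNewton (T : ℕ) (α : ℝ) (c : ℕ → ℝ) (S : ℕ → Set (n → ℝ)) (g w : ℕ → n → ℝ) :
    Prop where
  init : w 1 = 0
  mem : ∀ t ∈ Ico 1 T, w (t + 1) ∈ S (t + 1)
  isMinOn : ∀ t ∈ Ico 1 T, IsMinOn
    (fun v => √((v - (w t - (regularizedGram α c g t)⁻¹ *ᵥ g t)) ⬝ᵥ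
      regularizedGram α c g t *ᵥ (v - (w t - (regularizedGram α c g t)⁻¹ *ᵥ g t))))
    (S (t + 1)) (w (t + 1))

namespace IsOnlineNewton

variable {T : ℕ} {α : ℝ} {c : ℕ → ℝ} {S : ℕ → Set (n → ℝ)} {g w : ℕ → n → ℝ} {v : n → ℝ}

theorem mem_of_zero_mem (h : IsOnlineNewton T α c S g w) (h0 : 0 ∈ S 1) {t : ℕ}
    (ht : t ∈ Icc 1 T) : w t ∈ S t := by
  obtain ⟨ht1, htT⟩ := mem_Icc.1 ht
  obtain rfl | ht1 := ht1.eq_or_lt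
  · rwa [h.init]
  · simpa [Nat.sub_add_cancel ht1.le] using h.mem (t - 1) (mem_Ico.2 (by omega))

theorem dotProduct_mulVec_self_le (h : IsOnlineNewton T α c S g w) (hα : 0 < α)
    (hc : ∀ t ∈ Icc 1 T, 0 ≤ c t) {t : ℕ} (ht : t ∈ Ico 1 T) (hS : Convex ℝ (S (t + 1)))
    (hv : v ∈ S (t + 1)) :
    (w (t + 1) - v) ⬝ᵥ regularizedGram α c g t *ᵥ (w (t + 1) - v) ≤
      (w t - (regularizedGram α c g t)⁻¹ *ᵥ g t - v) ⬝ᵥ regularizedGram α c g t *ᵥ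
        (w t - (regularizedGram α c g t)⁻¹ *ᵥ g t - v) := by
  have hA : (regularizedGram α c g t).PosSemidef := (posDef_regularizedGram hα fun s hs =>
    hc s (Icc_subset_Icc_right (mem_Ico.1 ht).2.le hs)).posSemidef
  exact sub_dotProduct_mulVec_le_of_isMinOn hA hS (h.mem t ht) hv fun q hq =>
    (Real.sqrt_le_sqrt_iff (dotProduct_mulVec_self_nonneg hA _)).1 (h.isMinOn t ht hq)

theorem two_mul_sum_add_dotProduct_mulVec_self_le (h : IsOnlineNewton T α c S g w) (hα : 0 < α)
    (hc : ∀ t ∈ Icc 1 T, 0 ≤ c t) (hS : ∀ t ∈ Icc 1 T, Convex ℝ (S t))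
    (hv : ∀ t ∈ Icc 1 T, v ∈ S t) {k : ℕ} (hk : k < T) :
    2 * ∑ t ∈ Icc 1 k, g t ⬝ᵥ (w t - v)
        + (w (k + 1) - v) ⬝ᵥ regularizedGram α c g k *ᵥ (w (k + 1) - v) ≤
      α * (v ⬝ᵥ v) + ∑ t ∈ Icc 1 k, c t * (g t ⬝ᵥ (w t - v)) ^ 2
        + ∑ t ∈ Icc 1 k, g t ⬝ᵥ (regularizedGram α c g t)⁻¹ *ᵥ g t := by
  induction k with
  | zero => simp [h.init, regularizedGram_zero, smul_mulVec]
  | succ k ih =>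
    have hmem : k + 1 + 1 ∈ Icc 1 T := mem_Icc.2 (by omega)
    have hproj := h.dotProduct_mulVec_self_le hα hc (mem_Ico.2 ⟨by omega, hk⟩) (hS _ hmem)
      (hv _ hmem)
    rw [newton_step_dotProduct_mulVec_self hα fun s hs =>
      hc s (Icc_subset_Icc_right hk.le hs)] at hproj
    simp only [sum_Icc_succ_top (Nat.le_add_left 1 k)]
    linarith [ih (by omega)]

theorem two_mul_sum_dotProduct_sub_le (h : IsOnlineNewton T α c S g w) (hα : 0 < α)
    (hc : ∀ t ∈ Icc 1 T, 0 ≤ c t) (hS : ∀ t ∈ Icc 1 T, Convex ℝ (S t))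
    (hv : ∀ t ∈ Icc 1 T, v ∈ S t) :
    2 * ∑ t ∈ Icc 1 T, g t ⬝ᵥ (w t - v) ≤
      α * (v ⬝ᵥ v) + ∑ t ∈ Icc 1 T, c t * (g t ⬝ᵥ (w t - v)) ^ 2
        + ∑ t ∈ Icc 1 T, g t ⬝ᵥ (regularizedGram α c g t)⁻¹ *ᵥ g t := by
  cases T with
  | zero => simpa using mul_nonneg hα.le (dotProduct_star_self_nonneg v)
  | succ k =>
    have hfinal := dotProduct_mulVec_self_nonneg (posDef_regularizedGram (g := g) hα hc).posSemidef
      (w (k + 1) - (regularizedGram α c g (k + 1))⁻¹ *ᵥ g (k + 1) - v)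
    rw [newton_step_dotProduct_mulVec_self hα hc] at hfinal
    simp only [sum_Icc_succ_top (Nat.le_add_left 1 k)]
    linarith [h.two_mul_sum_add_dotProduct_mulVec_self_le hα hc hS hv k.lt_succ_self]

theorem sum_dotProduct_sub_le {G : ℝ} (h : IsOnlineNewton T α c S g w) (hα : 0 < α) (hG : 0 < G)
    (hc : ∀ t ∈ Icc 1 T, c t = √((Fintype.card n : ℝ) / (G ^ 2 * t)))
    (hS : ∀ t ∈ Icc 1 T, Convex ℝ (S t)) (hv : ∀ t ∈ Icc 1 T, v ∈ S t)
    (hbound : ∀ t ∈ Icc 1 T, |g t ⬝ᵥ (w t - v)| ≤ 2 * G) :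
    ∑ t ∈ Icc 1 T, g t ⬝ᵥ (w t - v) ≤
      α / 2 * (v ⬝ᵥ v) + G / 2 * √((T : ℝ) * Fintype.card n) * Real.log
        (1 + (∑ t ∈ Icc 1 T, g t ⬝ᵥ g t) / (α * (G * √((T : ℝ) * Fintype.card n))))
        + 4 * G * √((T : ℝ) * Fintype.card n) := by
  have hc0 : ∀ t ∈ Icc 1 T, 0 ≤ c t := fun t ht => hc t ht ▸ Real.sqrt_nonneg _
  have hregret := h.two_mul_sum_dotProduct_sub_le hα hc0 hS hv
  have hlog := sum_dotProduct_inv_le_mul_log hα hG hc g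
  have hsq : ∑ t ∈ Icc 1 T, c t * (g t ⬝ᵥ (w t - v)) ^ 2 ≤
      8 * G * √((T : ℝ) * Fintype.card n) := by
    calc ∑ t ∈ Icc 1 T, c t * (g t ⬝ᵥ (w t - v)) ^ 2
        ≤ ∑ t ∈ Icc 1 T, c t * (2 * G) ^ 2 := sum_le_sum fun t ht =>
          mul_le_mul_of_nonneg_left (sq_le_sq' (abs_le.1 (hbound t ht)).1
            (abs_le.1 (hbound t ht)).2) (hc0 t ht)
      _ = (∑ t ∈ Icc 1 T, √((Fintype.card n : ℝ) / (G ^ 2 * t))) * (2 * G) ^ 2 := by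
          rw [← sum_mul, sum_congr rfl hc]
      _ ≤ 2 * √((T : ℝ) * Fintype.card n) / G * (2 * G) ^ 2 := by
          gcongr
          exact sum_sqrt_div_le hG _ T
      _ = 8 * G * √((T : ℝ) * Fintype.card n) := by
          field_simp
          ring
  linarith

end IsOnlineNewton

end Iterates

section RidgeLoss

variable {n : Type*} [Fintype n]

/-- The constraint set `K_t = {w : |wᵀ x_t| ≤ C}` on which the predictions for the example `x_t`
are bounded by `C`. -/
def slab (C : ℝ) (x : n → ℝ) : Set (n → ℝ) :=
  {v | |v ⬝ᵥ x| ≤ C}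

theorem mem_slab_iff {C : ℝ} {x v : n → ℝ} : v ∈ slab C x ↔ v ⬝ᵥ x ∈ Set.Icc (-C) C := by
  simp [slab, abs_le]

theorem zero_mem_slab {C : ℝ} (hC : 0 ≤ C) (x : n → ℝ) : 0 ∈ slab C x := by
  simpa [slab] using hC

theorem convex_slab (C : ℝ) (x : n → ℝ) : Convex ℝ (slab C x) := by
  have hpreimage : slab C x = (LinearMap.flip (dotProductBilin ℝ ℝ) x) ⁻¹' Set.Icc (-C) C := by
    ext v
    exact mem_slab_iff
  exact hpreimage ▸ (convex_Icc _ _).linear_preimage _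

theorem abs_smul_dotProduct_sub_le {C L a : ℝ} {x p q : n → ℝ} (ha : |a| ≤ L)
    (hp : p ∈ slab C x) (hq : q ∈ slab C x) : |(a • x) ⬝ᵥ (p - q)| ≤ 2 * (C * L) := by
  have hpq : |p ⬝ᵥ x - q ⬝ᵥ x| ≤ 2 * C := by
    calc |p ⬝ᵥ x - q ⬝ᵥ x| ≤ |p ⬝ᵥ x| + |q ⬝ᵥ x| := abs_sub _ _
      _ ≤ 2 * C := by linarith [show |p ⬝ᵥ x| ≤ C from hp, show |q ⬝ᵥ x| ≤ C from hq]
  rw [smul_dotProduct, smul_eq_mul, abs_mul, dotProduct_comm, sub_dotProduct]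
  calc |a| * |p ⬝ᵥ x - q ⬝ᵥ x| ≤ L * (2 * C) := by gcongr; exact (abs_nonneg a).trans ha
    _ = 2 * (C * L) := by ring

theorem sub_le_deriv_mul_sub {s : Set ℝ} {ℓ : ℝ → ℝ} (hℓ : ConvexOn ℝ s ℓ) {a b : ℝ}
    (ha : a ∈ s) (hb : b ∈ s) (hd : DifferentiableAt ℝ ℓ a) :
    ℓ a - ℓ b ≤ deriv ℓ a * (a - b) := by
  rcases lt_trichotomy a b with hab | rfl | hba
  · have hslope := hℓ.deriv_le_slope ha hb hab hd
    rw [slope_def_field, le_div_iff₀ (sub_pos.2 hab)] at hslope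
    linarith
  · simp
  · have hslope := hℓ.slope_le_deriv hb ha hba hd
    rwa [slope_def_field, div_le_iff₀ (sub_pos.2 hba)] at hslope

theorem ridge_sub_le {s : Set ℝ} {ℓ : ℝ → ℝ} (hℓ : ConvexOn ℝ s ℓ) {x p q : n → ℝ}
    (hp : p ⬝ᵥ x ∈ s) (hq : q ⬝ᵥ x ∈ s) (hd : DifferentiableAt ℝ ℓ (p ⬝ᵥ x)) :
    ℓ (p ⬝ᵥ x) - ℓ (q ⬝ᵥ x) ≤ (deriv ℓ (p ⬝ᵥ x) • x) ⬝ᵥ (p - q) := by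
  rw [smul_dotProduct, smul_eq_mul, dotProduct_comm x, sub_dotProduct]
  exact sub_le_deriv_mul_sub hℓ hp hq hd

end RidgeLoss

end OnlineNewton

open OnlineNewton in
theorem online_newton_convex_case_general {n : Type*} [Fintype n] [DecidableEq n] {T : ℕ}
    {C L α : ℝ} (hC : 0 < C) (hL : 0 < L) (hα : 0 < α) {x : ℕ → n → ℝ} {ℓ : ℕ → ℝ → ℝ}
    {c : ℕ → ℝ} {w g : ℕ → n → ℝ}
    (hconv : ∀ t ∈ Icc 1 T, ConvexOn ℝ (Set.Icc (-C) C) (ℓ t))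
    (hdiff : ∀ t ∈ Icc 1 T, ∀ z ∈ Set.Icc (-C) C, DifferentiableAt ℝ (ℓ t) z)
    (hLip : ∀ t ∈ Icc 1 T, ∀ z ∈ Set.Icc (-C) C, |deriv (ℓ t) z| ≤ L)
    (hc : ∀ t ∈ Icc 1 T, c t = √((Fintype.card n : ℝ) / ((C * L) ^ 2 * t)))
    (hg : ∀ t ∈ Icc 1 T, g t = deriv (ℓ t) (w t ⬝ᵥ x t) • x t)
    (hw : IsOnlineNewton T α c (fun t => slab C (x t)) g w) {v : n → ℝ}
    (hv : ∀ t ∈ Icc 1 T, v ∈ slab C (x t)) :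
    ∑ t ∈ Icc 1 T, (ℓ t (w t ⬝ᵥ x t) - ℓ t (v ⬝ᵥ x t)) ≤
      α / 2 * (v ⬝ᵥ v) + C * L / 2 * √((T : ℝ) * Fintype.card n) * Real.log
        (1 + (∑ t ∈ Icc 1 T, g t ⬝ᵥ g t) / (α * C * L * √((T : ℝ) * Fintype.card n)))
        + 4 * C * L * √((T : ℝ) * Fintype.card n) := by
  have hmem : ∀ t ∈ Icc 1 T, w t ∈ slab C (x t) := fun t ht =>
    hw.mem_of_zero_mem (zero_mem_slab hC.le _) ht
  have hlin : ∀ t ∈ Icc 1 T, ℓ t (w t ⬝ᵥ x t) - ℓ t (v ⬝ᵥ x t) ≤ g t ⬝ᵥ (w t - v) := by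
    intro t ht
    have hwC := mem_slab_iff.1 (hmem t ht)
    exact hg t ht ▸ ridge_sub_le (hconv t ht) hwC (mem_slab_iff.1 (hv t ht)) (hdiff t ht _ hwC)
  have hbound : ∀ t ∈ Icc 1 T, |g t ⬝ᵥ (w t - v)| ≤ 2 * (C * L) := fun t ht =>
    hg t ht ▸ abs_smul_dotProduct_sub_le (hLip t ht _ (mem_slab_iff.1 (hmem t ht))) (hmem t ht)
      (hv t ht)
  have hregret := hw.sum_dotProduct_sub_le hα (mul_pos hC hL) hc
    (fun t _ => convex_slab C (x t)) hv hbound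
  simpa only [← mul_assoc] using (sum_le_sum hlin).trans hregret

/-- **Worst-case regret of Online Newton (Eq. (4)).** With `σ_t = 0` and
`η_t = √(d/(C²L²t))`, the Online Newton algorithm satisfies, for every `w ∈ K`,
`R_T(w) ≤ (α/2)‖w‖₂² + (CL/2)√(Td) ln(1 + Σ_t ‖g_t‖₂²/(αCL√(Td))) + 4CL√(Td)`. -/
theorem online_newton_convex_case
    (d T : ℕ) (C L α : ℝ) (hC : 0 < C) (hL : 0 < L) (hα : 0 < α)
    (x : ℕ → Fin d → ℝ) (ℓ : ℕ → ℝ → ℝ) (σ η : ℕ → ℝ)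
    (hconv : ∀ t ∈ Finset.Icc 1 T, ConvexOn ℝ Set.univ (ℓ t))
    (hdiff : ∀ t ∈ Finset.Icc 1 T, Differentiable ℝ (ℓ t))
    -- Scalar Lipschitz assumption
    (hLip : ∀ t ∈ Finset.Icc 1 T, ∀ z : ℝ, |z| ≤ C → |deriv (ℓ t) z| ≤ L)
    (hσ : ∀ t ∈ Finset.Icc 1 T, σ t = 0)
    (hηdef : ∀ t ∈ Finset.Icc 1 T, η t = Real.sqrt ((d : ℝ) / (C ^ 2 * L ^ 2 * t)))
    (K : Set (Fin d → ℝ))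
    (hK : K = {v : Fin d → ℝ | ∀ t ∈ Finset.Icc 1 T, |v ⬝ᵥ x t| ≤ C})
    (f : ℕ → (Fin d → ℝ) → ℝ)
    (hf : ∀ t, ∀ v : Fin d → ℝ, f t v = ℓ t (v ⬝ᵥ x t))
    (w u g : ℕ → Fin d → ℝ)
    (hg : ∀ t, g t = deriv (ℓ t) (w t ⬝ᵥ x t) • x t)
    -- Curvature assumption
    (hcurv : ∀ t ∈ Finset.Icc 1 T, ∀ p ∈ K, ∀ q ∈ K,
      f t p + (deriv (ℓ t) (p ⬝ᵥ x t) • x t) ⬝ᵥ (q - p)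
        + σ t / 2 * ((deriv (ℓ t) (p ⬝ᵥ x t) • x t) ⬝ᵥ (p - q)) ^ 2 ≤ f t q)
    (A : ℕ → Matrix (Fin d) (Fin d) ℝ)
    (hA : ∀ t, A t = α • (1 : Matrix (Fin d) (Fin d) ℝ)
        + ∑ s ∈ Finset.Icc 1 t, (σ s + η s) • Matrix.vecMulVec (g s) (g s))
    -- iterates
    (hw1 : w 1 = 0)
    (hu : ∀ t ∈ Finset.Icc 1 T, u (t + 1) = w t - (A t)⁻¹.mulVec (g t))
    (hproj : ∀ t ∈ Finset.Icc 1 T,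
      |w (t + 1) ⬝ᵥ x (t + 1)| ≤ C ∧
      ∀ v : Fin d → ℝ, |v ⬝ᵥ x (t + 1)| ≤ C →
        Real.sqrt ((w (t + 1) - u (t + 1)) ⬝ᵥ (A t).mulVec (w (t + 1) - u (t + 1))) ≤
          Real.sqrt ((v - u (t + 1)) ⬝ᵥ (A t).mulVec (v - u (t + 1)))) :
    ∀ wc ∈ K,
      ∑ t ∈ Finset.Icc 1 T, (f t (w t) - f t wc) ≤
        α / 2 * (wc ⬝ᵥ wc)
        + C * L / 2 * Real.sqrt ((T : ℝ) * d) *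
            Real.log (1 + (∑ t ∈ Finset.Icc 1 T, g t ⬝ᵥ g t)
              / (α * C * L * Real.sqrt ((T : ℝ) * d)))
        + 4 * C * L * Real.sqrt ((T : ℝ) * d) := by
  intro v hv
  subst hK
  obtain rfl : A = OnlineNewton.regularizedGram α (σ + η) g := funext hA
  have hIco {t : ℕ} (ht : t ∈ Ico 1 T) : t ∈ Icc 1 T := Ico_subset_Icc_self ht
  simpa only [hf, Fintype.card_fin] using
    online_newton_convex_case_general (c := σ + η) hC hL hα
      (fun t ht => (hconv t ht).subset (Set.subset_univ _) (convex_Icc _ _))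
      (fun t ht z _ => hdiff t ht z) (fun t ht z hz => hLip t ht z (abs_le.2 hz))
      (fun t ht => by simp [hσ t ht, hηdef t ht, mul_pow]) (fun t _ => hg t)
      { init := hw1
        mem := fun t ht => (hproj t (hIco ht)).1
        isMinOn := fun t ht => hu t (hIco ht) ▸ (hproj t (hIco ht)).2 } hv
end

section
/- Let g_1, ..., g_T ∈ R^d and define Â_t = Σ_{s=1}^t g_s g_s^⊤ for t = 1,...,T. For each t, let Â_t^† denote the Moore–Penrose pseudoinverse of Â_t (i.e., the unique matrix B with Â_t B Â_t = Â_t, B Â_t B = B, (Â_t B)^⊤ = Â_t B, (B Â_t)^⊤ = B Â_t). Let λ* > 0 be a lower bound on the smallest nonzero eigenvalue of Â_t for every t ∈ {1,...,T}, and let r be the rank of Â_T. Then Σ_{t=1}^T g_t^⊤ Â_t^† g_t ≤ r + ((1+r)r/2)·ln(1 + 2 Σ_{t=1}^T ‖g_t‖₂² / ((1+r) r λ*)). -/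
open Matrix Finset

/-!
Split `{1, …, T}` into phases on which the rank of `Â_t` is a constant `k`. The first step of a
phase contributes at most `1`, since `gᵀ Â† g ≤ 1` whenever `g gᵀ` is a summand of `Â`. On the rest
of the phase the range of `Â_t` is also constant, so if `Â_a = L Lᵀ` at the first step `a`, with `L`
injective on `ℝᵏ`, then `g_t = L h_t` and `Â_t = L C_t Lᵀ` with `C_t = 1 + ∑ h_s h_sᵀ` invertible.
Thus `g_tᵀ Â_t† g_t = h_tᵀ C_t⁻¹ h_t`, and the elliptical potential argument bounds the sum of these
by `log det C_b ≤ k log (1 + ∑ ‖h_t‖² / k)`, where `‖h_t‖² ≤ ‖g_t‖² / λ`. Jensen's inequality with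
weights `k = 1, …, r`, whose sum is `(1 + r) r / 2`, combines the phases.
-/

section InnerInverse

variable {m n k R : Type*} [Fintype m] [Fintype n] [Fintype k]

/-- `B` is an inner inverse (generalized inverse, `{1}`-inverse) of `A`: the first of the four
Penrose equations, which alone suffices for quadratic forms evaluated on the range of `A`. -/
def IsInnerInverse [NonUnitalNonAssocSemiring R] (A : Matrix m n R) (B : Matrix n m R) : Prop :=
  A * B * A = A

lemma IsInnerInverse.mulVec_mulVec_of_mem_range [CommSemiring R] {A : Matrix m n R}
    {B : Matrix n m R} (hB : IsInnerInverse A B) {v : m → R} (hv : v ∈ A.mulVecLin.range) :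
    A *ᵥ B *ᵥ v = v := by
  obtain ⟨x, rfl⟩ := hv
  rw [mulVecLin_apply, mulVec_mulVec, mulVec_mulVec, hB]

lemma IsInnerInverse.transpose_mul_mul_eq_inv [DecidableEq k] [CommRing R] {L : Matrix n k R}
    {C : Matrix k k R} {B : Matrix n n R} (hB : IsInnerInverse (L * C * Lᵀ) B)
    (hL : IsUnit (Lᵀ * L)) (hC : IsUnit C) : Lᵀ * B * L = C⁻¹ := by
  have hsandwich :
      (Lᵀ * L) * (C * (Lᵀ * B * L * C)) * (Lᵀ * L) = (Lᵀ * L) * (C * 1) * (Lᵀ * L) := by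
    have := congrArg (Lᵀ * · * L) hB
    simpa only [Matrix.mul_assoc, Matrix.mul_one] using this
  exact (inv_eq_left_inv
    (hC.mul_left_cancel (hL.mul_left_cancel (hL.mul_right_cancel hsandwich)))).symm

lemma IsInnerInverse.dotProduct_mulVec_eq_dotProduct_inv_mulVec [DecidableEq k] [CommRing R]
    {L : Matrix n k R} {C : Matrix k k R} {B : Matrix n n R}
    (hB : IsInnerInverse (L * C * Lᵀ) B) (hL : IsUnit (Lᵀ * L)) (hC : IsUnit C) (x : k → R) :
    (L *ᵥ x) ⬝ᵥ B *ᵥ L *ᵥ x = x ⬝ᵥ C⁻¹ *ᵥ x := by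
  rw [← hB.transpose_mul_mul_eq_inv hL hC, ← mulVec_mulVec, ← mulVec_mulVec,
    dotProduct_mulVec x, vecMul_transpose]

end InnerInverse

section Factorization

variable {m n R : Type*} [Fintype n]

lemma range_mulVecLin_self_mul_transpose [Fintype m] [Field R] [LinearOrder R]
    [IsStrictOrderedRing R] (M : Matrix m n R) :
    (M * Mᵀ).mulVecLin.range = M.mulVecLin.range := by
  refine Submodule.eq_of_le_of_finrank_eq ?_ (rank_self_mul_transpose M)
  rw [mulVecLin_mul]
  exact LinearMap.range_comp_le_range _ _

lemma submatrix_val_mul_transpose [NonUnitalNonAssocSemiring R] (W : Matrix m n R) (p : n → Prop)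
    [DecidablePred p] (hW : ∀ i j, ¬p j → W i j = 0) :
    W.submatrix id (Subtype.val : {j // p j} → n) *
      (W.submatrix id (Subtype.val : {j // p j} → n))ᵀ = W * Wᵀ := by
  ext i l
  have hsupp : ∀ j ∈ univ, W i j * W l j ≠ 0 → p j := fun j _ hne => by
    contrapose! hne
    rw [hW i j hne, zero_mul]
  simp only [mul_apply, submatrix_apply, transpose_apply, id_eq]
  rw [← sum_filter_of_ne hsupp, sum_subtype (p := p) _ (by simp)]

variable [DecidableEq n] {A : Matrix n n ℝ}

lemma exists_spectral_sqrt_factor (hA : A.PosSemidef) :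
    ∃ W : Matrix n n ℝ, W * Wᵀ = A ∧ Wᵀ * W = diagonal hA.1.eigenvalues := by
  set U : Matrix n n ℝ := hA.1.eigenvectorUnitary.1
  set D : Matrix n n ℝ := diagonal fun i => √(hA.1.eigenvalues i) with hD
  have hUU : Uᵀ * U = 1 := Unitary.coe_star_mul_self hA.1.eigenvectorUnitary
  have hDD : D * D = diagonal hA.1.eigenvalues := by
    simp only [hD, diagonal_mul_diagonal, Real.mul_self_sqrt (hA.eigenvalues_nonneg _)]
  have hDt : Dᵀ = D := diagonal_transpose _
  refine ⟨U * D, ?_, ?_⟩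
  · calc U * D * (U * D)ᵀ = U * (D * D) * Uᵀ := by
          simp only [transpose_mul, hDt, Matrix.mul_assoc]
      _ = A := by rw [hDD]; exact hA.1.spectral_theorem.symm
  · calc (U * D)ᵀ * (U * D) = D * (Uᵀ * U) * D := by
          simp only [transpose_mul, hDt, Matrix.mul_assoc]
      _ = diagonal hA.1.eigenvalues := by rw [hUU, Matrix.mul_one, hDD]

lemma exists_full_rank_spectral_factor (hA : A.PosSemidef) :
    ∃ L : Matrix n {i // hA.1.eigenvalues i ≠ 0} ℝ,
      L * Lᵀ = A ∧
        Lᵀ * L = diagonal fun i : {i // hA.1.eigenvalues i ≠ 0} => hA.1.eigenvalues i := by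
  obtain ⟨W, hWA, hWW⟩ := exists_spectral_sqrt_factor hA
  refine ⟨W.submatrix id Subtype.val, ?_, ?_⟩
  · rw [submatrix_val_mul_transpose W (hA.1.eigenvalues · ≠ 0), hWA]
    intro i j hj
    have hcol : Wᵀ j ⬝ᵥ Wᵀ j = 0 := by
      rw [← not_not.1 hj, ← diagonal_apply_eq hA.1.eigenvalues j, ← hWW]
      rfl
    exact congrFun (dotProduct_self_eq_zero.1 hcol) i
  · calc (W.submatrix id Subtype.val)ᵀ * W.submatrix id Subtype.val
        = (Wᵀ * W).submatrix Subtype.val Subtype.val := rfl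
      _ = diagonal fun i : {i // hA.1.eigenvalues i ≠ 0} => hA.1.eigenvalues i := by
        rw [hWW, submatrix_diagonal _ _ Subtype.val_injective]; rfl

lemma mul_dotProduct_self_le_of_transpose_mul_self_eq_diagonal [Fintype m] {L : Matrix m n ℝ}
    {w : n → ℝ} {lam : ℝ} (hL : Lᵀ * L = diagonal w) (hw : ∀ i, lam ≤ w i) (x : n → ℝ) :
    lam * (x ⬝ᵥ x) ≤ (L *ᵥ x) ⬝ᵥ (L *ᵥ x) := by
  rw [dotProduct_mulVec, vecMul_mulVec, hL]
  simp only [dotProduct, mul_sum, vecMul_diagonal]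
  refine sum_le_sum fun i _ => ?_
  nlinarith [hw i, mul_self_nonneg (x i)]

end Factorization

/-- The scatter matrix `∑ s ∈ S, g_s g_sᵀ` of the vectors `g_s`, `s ∈ S`; the paper's `Â_t` is
`scatterMatrix g (Icc 1 t)`. -/
def scatterMatrix {ι n : Type*} (g : ι → n → ℝ) (S : Finset ι) : Matrix n n ℝ :=
  ∑ s ∈ S, vecMulVec (g s) (g s)

namespace scatterMatrix

variable {ι n : Type*}

lemma posSemidef [Finite n] (g : ι → n → ℝ) (S : Finset ι) : (scatterMatrix g S).PosSemidef :=
  posSemidef_sum _ fun s _ => posSemidef_vecMulVec_self_star (g s)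

lemma posDef_one_add [Finite n] [DecidableEq n] (g : ι → n → ℝ) (S : Finset ι) :
    (1 + scatterMatrix g S).PosDef :=
  PosDef.one.add_posSemidef (posSemidef g S)

variable [Fintype n]

lemma trace_eq (g : ι → n → ℝ) (S : Finset ι) :
    (scatterMatrix g S).trace = ∑ s ∈ S, g s ⬝ᵥ g s := by
  simp only [scatterMatrix, trace_sum, trace_vecMulVec]

lemma range_mulVecLin_eq_span (g : ι → n → ℝ) (S : Finset ι) :
    (scatterMatrix g S).mulVecLin.range = Submodule.span ℝ (g '' S) := by
  set M : Matrix n S ℝ := of fun i s => g s i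
  have hM : scatterMatrix g S = M * Mᵀ := by
    ext i j
    simp only [scatterMatrix, Matrix.sum_apply, vecMulVec_apply, mul_apply, transpose_apply, M,
      of_apply]
    exact (sum_coe_sort S fun s => g s i * g s j).symm
  rw [hM, range_mulVecLin_self_mul_transpose, Matrix.range_mulVecLin, Set.image_eq_range]
  rfl

lemma mem_range {g : ι → n → ℝ} {S : Finset ι} {t : ι} (ht : t ∈ S) :
    g t ∈ (scatterMatrix g S).mulVecLin.range := by
  rw [range_mulVecLin_eq_span]
  exact Submodule.subset_span ⟨t, ht, rfl⟩

lemma range_mono (g : ι → n → ℝ) {S S' : Finset ι} (h : S ⊆ S') :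
    (scatterMatrix g S).mulVecLin.range ≤ (scatterMatrix g S').mulVecLin.range := by
  rw [range_mulVecLin_eq_span, range_mulVecLin_eq_span]
  exact Submodule.span_mono (Set.image_mono (coe_subset.2 h))

lemma rank_mono (g : ι → n → ℝ) {S S' : Finset ι} (h : S ⊆ S') :
    (scatterMatrix g S).rank ≤ (scatterMatrix g S').rank :=
  Submodule.finrank_mono (range_mono g h)

lemma mem_range_of_rank_eq {g : ι → n → ℝ} {S S' : Finset ι} (h : S ⊆ S')
    (hrank : (scatterMatrix g S).rank = (scatterMatrix g S').rank) {t : ι} (ht : t ∈ S') :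
    g t ∈ (scatterMatrix g S).mulVecLin.range := by
  rw [Submodule.eq_of_le_of_finrank_eq (range_mono g h) hrank]
  exact mem_range ht

lemma mul_mul_transpose {k : Type*} (L : Matrix k n ℝ) (h : ι → n → ℝ)
    (S : Finset ι) :
    L * scatterMatrix h S * Lᵀ = scatterMatrix (fun s => L *ᵥ h s) S := by
  simp only [scatterMatrix, Matrix.mul_sum, Matrix.sum_mul, mul_vecMulVec, vecMulVec_mul,
    vecMul_transpose]

lemma dotProduct_mulVec_self (g : ι → n → ℝ) (S : Finset ι) (x : n → ℝ) :
    x ⬝ᵥ scatterMatrix g S *ᵥ x = ∑ s ∈ S, (g s ⬝ᵥ x) ^ 2 := by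
  simp only [scatterMatrix, sum_mulVec, dotProduct_sum, vecMulVec_mulVec, op_smul_eq_smul,
    dotProduct_smul, smul_eq_mul, sq, dotProduct_comm x (g _)]

lemma dotProduct_innerInverse_mulVec_le_one {g : ι → n → ℝ} {S : Finset ι} {t : ι} (ht : t ∈ S)
    {B : Matrix n n ℝ} (hB : IsInnerInverse (scatterMatrix g S) B) :
    g t ⬝ᵥ B *ᵥ g t ≤ 1 := by
  have hsq : (g t ⬝ᵥ B *ᵥ g t) ^ 2 ≤ g t ⬝ᵥ B *ᵥ g t :=
    calc (g t ⬝ᵥ B *ᵥ g t) ^ 2 ≤ ∑ s ∈ S, (g s ⬝ᵥ B *ᵥ g t) ^ 2 :=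
          single_le_sum (f := fun s => (g s ⬝ᵥ B *ᵥ g t) ^ 2) (fun _ _ => sq_nonneg _) ht
      _ = g t ⬝ᵥ B *ᵥ g t := by
          rw [← dotProduct_mulVec_self, hB.mulVec_mulVec_of_mem_range (mem_range ht),
            dotProduct_comm]
  nlinarith

end scatterMatrix

lemma sum_mul_log_le {κ : Type*} {s : Finset κ} {w x : κ → ℝ} (hw : ∀ i ∈ s, 0 ≤ w i)
    (hx : ∀ i ∈ s, 0 < x i) :
    ∑ i ∈ s, w i * Real.log (x i) ≤
      (∑ i ∈ s, w i) * Real.log ((∑ i ∈ s, w i * x i) / ∑ i ∈ s, w i) := by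
  rcases (sum_nonneg hw).eq_or_lt with hzero | hpos
  · have hw_zero := (sum_eq_zero_iff_of_nonneg hw).1 hzero.symm
    rw [← hzero, zero_mul, sum_eq_zero fun i hi => by rw [hw_zero i hi, zero_mul]]
  · have := strictConcaveOn_log_Ioi.concaveOn.le_map_centerMass hw hpos hx
    simp only [centerMass, smul_eq_mul, Function.comp_apply] at this
    rwa [inv_mul_eq_div, inv_mul_eq_div, div_le_iff₀' hpos] at this

section EllipticalPotential

variable {ι n : Type*} [Fintype n] [DecidableEq n]

lemma log_det_le_card_mul_log_trace {C : Matrix n n ℝ} (hC : C.PosDef) :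
    Real.log C.det ≤ Fintype.card n * Real.log (C.trace / Fintype.card n) := by
  have hjensen := sum_mul_log_le (s := univ) (w := fun _ : n => 1) (fun _ _ => zero_le_one)
    fun i _ => hC.eigenvalues_pos i
  have hdet : C.det = ∏ i, hC.1.eigenvalues i := hC.1.det_eq_prod_eigenvalues
  have htrace : C.trace = ∑ i, hC.1.eigenvalues i := hC.1.trace_eq_sum_eigenvalues
  rw [hdet, htrace, Real.log_prod fun i _ => (hC.eigenvalues_pos i).ne']
  simpa using hjensen

lemma log_det_one_add_scatterMatrix_le (h : ι → n → ℝ) (S : Finset ι) :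
    Real.log (1 + scatterMatrix h S).det ≤
      Fintype.card n * Real.log (1 + (∑ s ∈ S, h s ⬝ᵥ h s) / Fintype.card n) := by
  have hle := log_det_le_card_mul_log_trace (scatterMatrix.posDef_one_add h S)
  rcases eq_or_ne (Fintype.card n : ℝ) 0 with hcard | hcard
  · simpa only [hcard, zero_mul] using hle
  · rwa [trace_add, trace_one, scatterMatrix.trace_eq, add_div, div_self hcard] at hle

lemma dotProduct_inv_add_vecMulVec_mulVec_le {C : Matrix n n ℝ} (hC : C.PosDef) (h : n → ℝ) :
    h ⬝ᵥ (C + vecMulVec h h)⁻¹ *ᵥ h ≤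
      Real.log (C + vecMulVec h h).det - Real.log C.det := by
  set C' := C + vecMulVec h h with hC'
  have hpos : 0 < C'.det := (hC.add_posSemidef (posSemidef_vecMulVec_self_star h)).det_pos
  have hdet : C.det = C'.det * (1 - h ⬝ᵥ C'⁻¹ *ᵥ h) := by
    have := det_add_replicateCol_mul_replicateRow (ι := Unit) hpos.ne'.isUnit (-h) h
    rw [← vecMulVec_eq, neg_vecMulVec, hC', add_neg_cancel_right, ← hC', Matrix.mul_assoc,
      ← replicateCol_mulVec, det_unique (_ : Matrix Unit Unit ℝ)] at this
    simpa [mulVec_neg, sub_eq_add_neg] using this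
  have hgap : 0 < 1 - h ⬝ᵥ C'⁻¹ *ᵥ h := (mul_pos_iff_of_pos_left hpos).1 (hdet ▸ hC.det_pos)
  rw [hdet, Real.log_mul hpos.ne' hgap.ne']
  linarith [Real.log_le_sub_one_of_pos hgap]

lemma sum_dotProduct_inv_mulVec_le_log_det (h : ℕ → n → ℝ) {a b : ℕ} (hab : a ≤ b) :
    ∑ t ∈ Ioc a b, h t ⬝ᵥ (1 + scatterMatrix h (Ioc a t))⁻¹ *ᵥ h t ≤
      Real.log (1 + scatterMatrix h (Ioc a b)).det := by
  induction b, hab using Nat.le_induction with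
  | base => simp [scatterMatrix]
  | succ b hab ih =>
    have hsucc : 1 + scatterMatrix h (Ioc a (b + 1)) =
        1 + scatterMatrix h (Ioc a b) + vecMulVec (h (b + 1)) (h (b + 1)) := by
      rw [scatterMatrix, sum_Ioc_succ_top (by lia), ← add_assoc, scatterMatrix]
    have hstep := dotProduct_inv_add_vecMulVec_mulVec_le
      (scatterMatrix.posDef_one_add h (Ioc a b)) (h (b + 1))
    rw [sum_Ioc_succ_top (by lia), hsucc]
    linarith

lemma sum_dotProduct_innerInverse_mulVec_le {A : Matrix n n ℝ} (hA : A.PosSemidef) {lam : ℝ}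
    (hlam : 0 < lam) (hev : ∀ i, hA.1.eigenvalues i ≠ 0 → lam ≤ hA.1.eigenvalues i)
    {g : ℕ → n → ℝ} {B : ℕ → Matrix n n ℝ} {a b : ℕ} (hab : a ≤ b)
    (hg : ∀ t ∈ Ioc a b, g t ∈ A.mulVecLin.range)
    (hB : ∀ t ∈ Ioc a b, IsInnerInverse (A + scatterMatrix g (Ioc a t)) (B t)) :
    ∑ t ∈ Ioc a b, g t ⬝ᵥ B t *ᵥ g t ≤
      A.rank * Real.log (1 + (∑ t ∈ Ioc a b, g t ⬝ᵥ g t) / (A.rank * lam)) := by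
  obtain ⟨L, hLA, hLL⟩ := exists_full_rank_spectral_factor hA
  have hunit : IsUnit (Lᵀ * L) := by
    rw [hLL, isUnit_diagonal, Pi.isUnit_iff]
    exact fun i => i.2.isUnit
  rw [← hLA, range_mulVecLin_self_mul_transpose] at hg
  choose! h hh using hg
  simp only [mulVecLin_apply] at hh
  have hterm : ∀ t ∈ Ioc a b, g t ⬝ᵥ B t *ᵥ g t =
      h t ⬝ᵥ (1 + scatterMatrix h (Ioc a t))⁻¹ *ᵥ h t := fun t ht => by
    have hconj : A + scatterMatrix g (Ioc a t) = L * (1 + scatterMatrix h (Ioc a t)) * Lᵀ := by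
      rw [Matrix.mul_add, Matrix.add_mul, Matrix.mul_one, hLA, scatterMatrix.mul_mul_transpose]
      congr 1
      exact sum_congr rfl fun s hs => by simp only [hh s (Ioc_subset_Ioc_right (mem_Ioc.1 ht).2 hs)]
    have hB' : IsInnerInverse (L * (1 + scatterMatrix h (Ioc a t)) * Lᵀ) (B t) := hconj ▸ hB t ht
    rw [← hh t ht, hB'.dotProduct_mulVec_eq_dotProduct_inv_mulVec hunit
      (scatterMatrix.posDef_one_add ..).isUnit]
  have henergy : ∑ t ∈ Ioc a b, h t ⬝ᵥ h t ≤ (∑ t ∈ Ioc a b, g t ⬝ᵥ g t) / lam := by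
    rw [le_div_iff₀' hlam, mul_sum]
    refine sum_le_sum fun t ht => ?_
    rw [← hh t ht]
    exact mul_dotProduct_self_le_of_transpose_mul_self_eq_diagonal hLL (fun i => hev i i.2) (h t)
  have hnonneg : 0 ≤ ∑ t ∈ Ioc a b, h t ⬝ᵥ h t :=
    sum_nonneg fun t _ => dotProduct_star_self_nonneg (h t)
  calc ∑ t ∈ Ioc a b, g t ⬝ᵥ B t *ᵥ g t
      ≤ Real.log (1 + scatterMatrix h (Ioc a b)).det := by
        rw [sum_congr rfl hterm]
        exact sum_dotProduct_inv_mulVec_le_log_det h hab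
    _ ≤ A.rank * Real.log (1 + (∑ t ∈ Ioc a b, h t ⬝ᵥ h t) / A.rank) := by
        rw [hA.1.rank_eq_card_non_zero_eigs]
        exact log_det_one_add_scatterMatrix_le h _
    _ ≤ A.rank * Real.log (1 + (∑ t ∈ Ioc a b, g t ⬝ᵥ g t) / (A.rank * lam)) := by
        rw [mul_comm (A.rank : ℝ) lam, ← div_div]
        gcongr

end EllipticalPotential

lemma exists_filter_eq_Icc {α β : Type*} [LinearOrder α] [LocallyFiniteOrder α] [PartialOrder β]
    [DecidableEq β] {ρ : α → β} (hρ : Monotone ρ) {m n : α} {k : β}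
    (hne : ((Icc m n).filter (ρ · = k)).Nonempty) :
    ∃ a b, a ≤ b ∧ (Icc m n).filter (ρ · = k) = Icc a b := by
  refine ⟨min' _ hne, max' _ hne, min'_le_max' _ hne, ?_⟩
  obtain ⟨hm, ha⟩ := mem_filter.1 (min'_mem _ hne)
  obtain ⟨hn, hb⟩ := mem_filter.1 (max'_mem _ hne)
  refine Subset.antisymm (fun t ht => mem_Icc.2 ⟨min'_le _ t ht, le_max' _ t ht⟩) fun t ht => ?_
  obtain ⟨hat, htb⟩ := mem_Icc.1 ht
  exact mem_filter.2 ⟨mem_Icc.2 ⟨(mem_Icc.1 hm).1.trans hat, htb.trans (mem_Icc.1 hn).2⟩,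
    ((hρ htb).trans_eq hb).antisymm (ha.symm.trans_le (hρ hat))⟩

section RankPhases

variable {n : Type*} [Fintype n]

lemma monotone_rank_scatterMatrix_Icc (g : ℕ → n → ℝ) (m : ℕ) :
    Monotone fun t => (scatterMatrix g (Icc m t)).rank :=
  fun _ _ hst => scatterMatrix.rank_mono g (Icc_subset_Icc_right hst)

lemma sum_Icc_eq_sum_rank_fiberwise {M : Type*} [AddCommMonoid M] (g : ℕ → n → ℝ) (T : ℕ)
    {f : ℕ → M} (hf : ∀ t, g t = 0 → f t = 0) :
    ∑ t ∈ Icc 1 T, f t = ∑ k ∈ Icc 1 (scatterMatrix g (Icc 1 T)).rank,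
      ∑ t ∈ Icc 1 T with (scatterMatrix g (Icc 1 t)).rank = k, f t := by
  rw [sum_fiberwise_eq_sum_filter, sum_filter_of_ne]
  intro t ht hne
  obtain ⟨ht1, htT⟩ := mem_Icc.1 ht
  refine mem_Icc.2 ⟨Nat.one_le_iff_ne_zero.2 fun hrank => hne (hf t ?_),
    monotone_rank_scatterMatrix_Icc g 1 htT⟩
  have hmem := scatterMatrix.mem_range (g := g) (mem_Icc.2 ⟨ht1, le_rfl⟩)
  rwa [Submodule.finrank_eq_zero.1 hrank, Submodule.mem_bot] at hmem

variable [DecidableEq n] {T : ℕ} {g : ℕ → n → ℝ} {B : ℕ → Matrix n n ℝ} {lam : ℝ}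

lemma sum_Icc_dotProduct_innerInverse_mulVec_le {a b : ℕ} (ha : 1 ≤ a) (hab : a ≤ b)
    (hrank : (scatterMatrix g (Icc 1 a)).rank = (scatterMatrix g (Icc 1 b)).rank)
    (hB : ∀ t ∈ Icc a b, IsInnerInverse (scatterMatrix g (Icc 1 t)) (B t)) (hlam : 0 < lam)
    (hev : ∀ i, (scatterMatrix.posSemidef g (Icc 1 a)).1.eigenvalues i ≠ 0 →
      lam ≤ (scatterMatrix.posSemidef g (Icc 1 a)).1.eigenvalues i) :
    ∑ t ∈ Icc a b, g t ⬝ᵥ B t *ᵥ g t ≤ 1 + (scatterMatrix g (Icc 1 a)).rank *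
      Real.log (1 + (∑ t ∈ Icc a b, g t ⬝ᵥ g t) / ((scatterMatrix g (Icc 1 a)).rank * lam)) := by
  have hsplit : ∀ t ∈ Ioc a b, scatterMatrix g (Icc 1 t) =
      scatterMatrix g (Icc 1 a) + scatterMatrix g (Ioc a t) := fun t ht =>
    -- `Icc 1 t` and `Ioc 0 t` are definitionally equal.
    (sum_Ioc_consecutive (fun s => vecMulVec (g s) (g s)) a.zero_le (mem_Ioc.1 ht).1.le).symm
  have hfirst : g a ⬝ᵥ B a *ᵥ g a ≤ 1 := scatterMatrix.dotProduct_innerInverse_mulVec_le_one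
    (mem_Icc.2 ⟨ha, le_rfl⟩) (hB a (left_mem_Icc.2 hab))
  have hrest := sum_dotProduct_innerInverse_mulVec_le (scatterMatrix.posSemidef g (Icc 1 a)) hlam
    hev hab
    (fun t ht => scatterMatrix.mem_range_of_rank_eq (Icc_subset_Icc_right hab) hrank
      (mem_Icc.2 ⟨ha.trans (mem_Ioc.1 ht).1.le, (mem_Ioc.1 ht).2⟩))
    (fun t ht => hsplit t ht ▸ hB t (Ioc_subset_Icc_self ht))
  have hnonneg : 0 ≤ ∑ t ∈ Ioc a b, g t ⬝ᵥ g t :=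
    sum_nonneg fun t _ => dotProduct_star_self_nonneg (g t)
  have hmono : ∑ t ∈ Ioc a b, g t ⬝ᵥ g t ≤ ∑ t ∈ Icc a b, g t ⬝ᵥ g t :=
    sum_le_sum_of_subset_of_nonneg Ioc_subset_Icc_self fun t _ _ =>
      dotProduct_star_self_nonneg (g t)
  rw [← add_sum_Ioc_eq_sum_Icc hab]
  refine (add_le_add hfirst hrest).trans ?_
  gcongr

lemma sum_rank_eq_dotProduct_innerInverse_mulVec_le
    (hB : ∀ t ∈ Icc 1 T, IsInnerInverse (scatterMatrix g (Icc 1 t)) (B t)) (hlam : 0 < lam)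
    (hev : ∀ t ∈ Icc 1 T, ∀ i, (scatterMatrix.posSemidef g (Icc 1 t)).1.eigenvalues i ≠ 0 →
      lam ≤ (scatterMatrix.posSemidef g (Icc 1 t)).1.eigenvalues i) (k : ℕ) :
    ∑ t ∈ Icc 1 T with (scatterMatrix g (Icc 1 t)).rank = k, g t ⬝ᵥ B t *ᵥ g t ≤
      1 + k * Real.log (1 + (∑ t ∈ Icc 1 T with (scatterMatrix g (Icc 1 t)).rank = k,
        g t ⬝ᵥ g t) / (k * lam)) := by
  rcases ((Icc 1 T).filter fun t => (scatterMatrix g (Icc 1 t)).rank = k).eq_empty_or_nonempty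
    with hempty | hne
  · simp [hempty]
  · obtain ⟨a, b, hab, hphase⟩ := exists_filter_eq_Icc (monotone_rank_scatterMatrix_Icc g 1) hne
    have hmem : ∀ t ∈ Icc a b, t ∈ Icc 1 T ∧ (scatterMatrix g (Icc 1 t)).rank = k :=
      fun t ht => mem_filter.1 (hphase ▸ ht)
    obtain ⟨haT, hak⟩ := hmem a (left_mem_Icc.2 hab)
    have hbk := (hmem b (right_mem_Icc.2 hab)).2
    have := sum_Icc_dotProduct_innerInverse_mulVec_le (mem_Icc.1 haT).1 hab (hak.trans hbk.symm)
      (fun t ht => hB t (hmem t ht).1) hlam (hev a haT)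
    rwa [hak, ← hphase] at this

end RankPhases

lemma sum_Icc_one_natCast (r : ℕ) : ∑ k ∈ Icc 1 r, (k : ℝ) = (1 + r) * r / 2 := by
  induction r with
  | zero => simp
  | succ r ih =>
    rw [sum_Icc_succ_top (by lia), ih]
    push_cast
    ring

lemma sum_Icc_mul_log_one_add_div_le {r : ℕ} {lam : ℝ} (hlam : 0 < lam) {s : ℕ → ℝ}
    (hs : ∀ k, 0 ≤ s k) :
    ∑ k ∈ Icc 1 r, k * Real.log (1 + s k / (k * lam)) ≤ (1 + (r : ℝ)) * r / 2 *
      Real.log (1 + 2 * (∑ k ∈ Icc 1 r, s k) / ((1 + r) * r * lam)) := by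
  rcases r.eq_zero_or_pos with rfl | hr
  · simp
  have hjensen := sum_mul_log_le (s := Icc 1 r) (w := fun k => (k : ℝ))
    (x := fun k => 1 + s k / (k * lam)) (fun k _ => k.cast_nonneg) fun k _ => by
      have := hs k
      positivity
  have hweighted : ∑ k ∈ Icc 1 r, (k : ℝ) * (1 + s k / (k * lam)) =
      (1 + (r : ℝ)) * r / 2 + (∑ k ∈ Icc 1 r, s k) / lam := by
    rw [← sum_Icc_one_natCast, sum_div, ← sum_add_distrib]
    refine sum_congr rfl fun k hk => ?_
    have : (k : ℝ) ≠ 0 := Nat.cast_ne_zero.2 (Nat.one_le_iff_ne_zero.1 (mem_Icc.1 hk).1)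
    field_simp
  rw [hweighted, sum_Icc_one_natCast] at hjensen
  convert hjensen using 3
  field_simp

theorem pseudoinverse_gradient_bound_general {n : Type*} [Fintype n] [DecidableEq n]
    (T : ℕ) (g : ℕ → n → ℝ) (B : ℕ → Matrix n n ℝ)
    (hB : ∀ t ∈ Icc 1 T, IsInnerInverse (scatterMatrix g (Icc 1 t)) (B t))
    (lam : ℝ) (hlam : 0 < lam)
    (hev : ∀ t ∈ Icc 1 T, ∀ i, (scatterMatrix.posSemidef g (Icc 1 t)).1.eigenvalues i ≠ 0 →
      lam ≤ (scatterMatrix.posSemidef g (Icc 1 t)).1.eigenvalues i)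
    (r : ℕ) (hr : r = (scatterMatrix g (Icc 1 T)).rank) :
    ∑ t ∈ Icc 1 T, g t ⬝ᵥ B t *ᵥ g t ≤
      r + (1 + (r : ℝ)) * r / 2 *
        Real.log (1 + 2 * (∑ t ∈ Icc 1 T, g t ⬝ᵥ g t) / ((1 + r) * r * lam)) := by
  set s : ℕ → ℝ := fun k =>
    ∑ t ∈ Icc 1 T with (scatterMatrix g (Icc 1 t)).rank = k, g t ⬝ᵥ g t
  have hs : ∀ k, 0 ≤ s k := fun k => sum_nonneg fun t _ => dotProduct_star_self_nonneg (g t)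
  have htotal : ∑ t ∈ Icc 1 T, g t ⬝ᵥ g t = ∑ k ∈ Icc 1 r, s k :=
    hr ▸ sum_Icc_eq_sum_rank_fiberwise g T fun t ht => by rw [ht, zero_dotProduct]
  calc ∑ t ∈ Icc 1 T, g t ⬝ᵥ B t *ᵥ g t
      = ∑ k ∈ Icc 1 r, ∑ t ∈ Icc 1 T with (scatterMatrix g (Icc 1 t)).rank = k,
          g t ⬝ᵥ B t *ᵥ g t :=
        hr ▸ sum_Icc_eq_sum_rank_fiberwise g T fun t ht => by rw [ht, zero_dotProduct]
    _ ≤ ∑ k ∈ Icc 1 r, (1 + k * Real.log (1 + s k / (k * lam))) :=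
        sum_le_sum fun k _ => sum_rank_eq_dotProduct_innerInverse_mulVec_le hB hlam hev k
    _ = r + ∑ k ∈ Icc 1 r, k * Real.log (1 + s k / (k * lam)) := by
        simp [sum_add_distrib]
    _ ≤ _ := by
        rw [htotal]
        gcongr
        exact sum_Icc_mul_log_one_add_div_le hlam hs

/-- **Theorem 5 (pseudoinverse gradient bound).** Let `g_1,…,g_T ∈ ℝ^d` be nonzero,
`Â_t = Σ_{s≤t} g_s g_sᵀ`, `B_t` the Moore–Penrose pseudoinverse of `Â_t`, `λ* > 0` a lower
bound on the smallest nonzero eigenvalue of each `Â_t`, and `r = rank(Â_T)`. Then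
`Σ_t g_tᵀ Â_t† g_t ≤ r + ((1+r)r/2) ln(1 + 2Σ_t‖g_t‖₂²/((1+r)rλ*))`. -/
theorem pseudoinverse_gradient_bound
    (d T : ℕ) (g : ℕ → Fin d → ℝ)
    (hgne : ∀ t ∈ Finset.Icc 1 T, g t ≠ 0)
    (Ahat : ℕ → Matrix (Fin d) (Fin d) ℝ)
    (hAhat : ∀ t, Ahat t = ∑ s ∈ Finset.Icc 1 t, Matrix.vecMulVec (g s) (g s))
    (hHerm : ∀ t, (Ahat t).IsHermitian)
    (B : ℕ → Matrix (Fin d) (Fin d) ℝ)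
    (hB : ∀ t ∈ Finset.Icc 1 T,
      Ahat t * B t * Ahat t = Ahat t ∧ B t * Ahat t * B t = B t ∧
      (Ahat t * B t)ᵀ = Ahat t * B t ∧ (B t * Ahat t)ᵀ = B t * Ahat t)
    (lam : ℝ) (hlam : 0 < lam)
    (hlamlb : ∀ t ∈ Finset.Icc 1 T, ∀ i : Fin d,
      (hHerm t).eigenvalues i ≠ 0 → lam ≤ (hHerm t).eigenvalues i)
    (r : ℕ) (hr : r = (Ahat T).rank) :
    ∑ t ∈ Finset.Icc 1 T, g t ⬝ᵥ (B t).mulVec (g t) ≤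
      (r : ℝ) + (1 + (r : ℝ)) * r / 2 *
        Real.log (1 + 2 * (∑ t ∈ Finset.Icc 1 T, g t ⬝ᵥ g t) / ((1 + (r : ℝ)) * r * lam)) := by
  obtain rfl : Ahat = fun t => scatterMatrix g (Icc 1 t) := funext hAhat
  exact pseudoinverse_gradient_bound_general T g B (fun t ht => (hB t ht).1) lam hlam hlamlb r hr
end

section
/- Consider the truly invariant online Newton algorithm: A_t = Σ_{s=1}^t (σ_s + η_s) g_s g_s^⊤ with g_t = ∇f_t(w_t), iterates w_1 = 0, u_{t+1} = w_t − A_t^† g_t and w_{t+1} = argmin_{w ∈ K_{t+1}} ‖w − u_{t+1}‖_{A_t}, where A_t^† is the Moore–Penrose pseudoinverse of A_t. Suppose the losses satisfy the Scalar Lipschitz and Curvature assumptions with σ_t = 0 for all t, and set η_t = (1/(CL))·√(d/t). Let λ* be the minimum among the smallest nonzero eigenvalues of Â_t = Σ_{s=1}^t g_s g_s^⊤ over t = 1,...,T, and let r be the rank of Â_T. Then for every w ∈ K, R_T(w) ≤ (CL/2)·√(T/d)·( r + ((1+r)r/2)·ln(1 + 2 Σ_{t=1}^T ‖g_t‖₂²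 / ((1+r) r λ*)) ) + 4 C L √(Td). -/
open Matrix Finset

/-!
Bounding each loss by its linearisation and telescoping the distances `‖w_t - v‖²_{A_t}` over the
projected Newton steps bounds twice the regret by `∑ g_t ⬝ A_t† g_t + ∑ η_t (g_t ⬝ (w_t - v))²`. The
terms of the second sum are of order `1/√t`. As `η` is decreasing, `η_T Â_t ≤ A_t`, so the first sum
is at most `1/η_T` times `∑ g_t ⬝ Â_t† g_t`, which the potential `log det (1 + κ Â_t)` controls:

* when `g_t` leaves the rank unchanged, the spectral gap gives `Â_t† ≤ (κ + 1/λ) (1 + κ Â_t)⁻¹`, so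
  the cost of the step is at most `1 + 1/(κλ)` times the increase of the potential;
* when `g_t` raises the rank, which happens `r` times, the cost is at most `1` and the potential
  increases by at least `log (1 + κλ)`.

By AM-GM the final potential is at most `r log (1 + κ G / r)`, where `G = ∑ ‖g_t‖²`. As `κ → ∞` the
terms `r log (1 + κλ)` cancel its growth and leave `∑ g_t ⬝ Â_t† g_t ≤ r + r log (G / (rλ))`. Since
`r ≤ (1 + r) r / 2`, Bernoulli's inequality puts the logarithm into its stated form.
-/

section LoewnerOrder

open scoped MatrixOrder

theorem dotProduct_mulVec_comm_of_isSymm {ι R : Type*} [Fintype ι] [CommSemiring R]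
    {A : Matrix ι ι R} (hA : A.IsSymm) (v w : ι → R) : v ⬝ᵥ A *ᵥ w = w ⬝ᵥ A *ᵥ v := by
  rw [dotProduct_mulVec, ← mulVec_transpose, hA.eq, dotProduct_comm]

theorem dotProduct_vecMulVec_self_mulVec {ι R : Type*} [Fintype ι] [CommSemiring R] (g v : ι → R) :
    v ⬝ᵥ vecMulVec g g *ᵥ v = (g ⬝ᵥ v) ^ 2 := by
  simp [vecMulVec_mulVec, dotProduct_comm v g, sq]

theorem posSemidef_vecMulVec_self {ι : Type*} [Finite ι] (g : ι → ℝ) :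
    (vecMulVec g g).PosSemidef :=
  posSemidef_vecMulVec_self_star g

theorem rank_add_le_rank_add_rank {m n F : Type*} [Fintype n] [Field F]
    (A B : Matrix m n F) : (A + B).rank ≤ A.rank + B.rank := by
  rw [Matrix.rank, mulVecLin_add]
  exact (Submodule.finrank_mono (LinearMap.range_add_le _ _)).trans
    (Submodule.finrank_add_le_finrank_add_finrank _ _)

theorem exists_mulVec_ne_zero_of_rank_lt {l m n F : Type*} [Fintype m] [Fintype n]
    [Field F] {A : Matrix l m F} {B : Matrix m n F} (h : A.rank < B.rank) :
    ∃ v, B *ᵥ v ≠ 0 ∧ A *ᵥ (B *ᵥ v) = 0 := by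
  by_contra! hAB
  have hdisj : Disjoint (LinearMap.range B.mulVecLin) (LinearMap.ker A.mulVecLin) := by
    rw [Submodule.disjoint_def]
    rintro _ ⟨v, rfl⟩ hv
    exact not_imp_not.mp (hAB v) hv
  have hsum : B.rank + _ ≤ _ := Submodule.finrank_add_finrank_le_of_disjoint hdisj
  have hker : A.rank + _ = _ := A.mulVecLin.finrank_range_add_finrank_ker
  omega

theorem posDef_one_add_smul {ι : Type*} [DecidableEq ι] {B : Matrix ι ι ℝ} {κ : ℝ}
    (hB : B.PosSemidef) (hκ : 0 ≤ κ) : (1 + κ • B).PosDef :=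
  PosDef.one.add_posSemidef (hB.smul hκ)

variable {ι : Type*} [Fintype ι] {A B P : Matrix ι ι ℝ} {g m p : ι → ℝ}

theorem dotProduct_mulVec_le_of_le (h : A ≤ B) (v : ι → ℝ) : v ⬝ᵥ A *ᵥ v ≤ v ⬝ᵥ B *ᵥ v := by
  simpa [sub_mulVec, dotProduct_sub] using PosSemidef.dotProduct_mulVec_nonneg h v

theorem sq_dotProduct_mulVec_le (hB : B.PosSemidef) (v w : ι → ℝ) :
    (v ⬝ᵥ B *ᵥ w) ^ 2 ≤ (v ⬝ᵥ B *ᵥ v) * (w ⬝ᵥ B *ᵥ w) := by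
  have hcomm := dotProduct_mulVec_comm_of_isSymm (isHermitian_iff_isSymm.mp hB.isHermitian) w v
  have hdiscrim := discrim_le_zero (a := v ⬝ᵥ B *ᵥ v) (b := 2 * (v ⬝ᵥ B *ᵥ w))
    (c := w ⬝ᵥ B *ᵥ w) fun s ↦ by
    have h := hB.dotProduct_mulVec_nonneg (s • v + w)
    simp only [star_trivial, mulVec_add, mulVec_smul, add_dotProduct, dotProduct_add,
      smul_dotProduct, dotProduct_smul, smul_eq_mul, hcomm] at h
    linarith
  rw [discrim] at hdiscrim
  linarith

theorem rank_le_rank_of_le (hA : A.PosSemidef) (hAB : A ≤ B) : A.rank ≤ B.rank := by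
  have hker : LinearMap.ker B.mulVecLin ≤ LinearMap.ker A.mulVecLin := fun v (hv : B *ᵥ v = 0) ↦ by
    have hle := dotProduct_mulVec_le_of_le hAB v
    rw [hv, dotProduct_zero] at hle
    exact (hA.dotProduct_mulVec_zero_iff v).mp (le_antisymm hle (hA.dotProduct_mulVec_nonneg v))
  have hfin := Submodule.finrank_mono hker
  have hrankA : A.rank + _ = _ := A.mulVecLin.finrank_range_add_finrank_ker
  have hrankB : B.rank + _ = _ := B.mulVecLin.finrank_range_add_finrank_ker
  omega

theorem rank_vecMulVec_self_pos (hg : g ≠ 0) : 0 < (vecMulVec g g).rank := by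
  refine Submodule.one_le_finrank_iff.mpr ((Submodule.ne_bot_iff _).mpr ⟨_, ⟨g, rfl⟩, ?_⟩)
  simpa [vecMulVec_mulVec] using hg

theorem dotProduct_le_dotProduct_of_mulVec_eq (hB : B.PosSemidef) (hBA : B ≤ A)
    (hp : A *ᵥ p = g) (hm : B *ᵥ m = g) : g ⬝ᵥ p ≤ g ⬝ᵥ m := by
  have hle := dotProduct_mulVec_le_of_le hBA p
  have hcross : m ⬝ᵥ B *ᵥ p = g ⬝ᵥ p := by
    rw [dotProduct_mulVec_comm_of_isSymm (isHermitian_iff_isSymm.mp hB.isHermitian), hm,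
      dotProduct_comm]
  have hsq := hB.dotProduct_mulVec_nonneg (p - m)
  simp only [star_trivial, mulVec_sub, dotProduct_sub, sub_dotProduct, hm, hcross] at hsq
  rw [hp] at hle
  linarith [dotProduct_comm p g, dotProduct_comm m g]

theorem dotProduct_le_one_of_vecMulVec_le (hg : vecMulVec g g ≤ B) (hm : B *ᵥ m = g) :
    g ⬝ᵥ m ≤ 1 := by
  have hle := dotProduct_mulVec_le_of_le hg m
  rw [dotProduct_vecMulVec_self_mulVec, hm, dotProduct_comm m] at hle
  nlinarith

theorem mulVec_mulVec_of_smul_vecMulVec_le {c : ℝ} (hP : A * P * A = A) (hc : 0 < c)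
    (hg : c • vecMulVec g g ≤ A) : A *ᵥ (P *ᵥ g) = g := by
  classical
  set N := 1 - A * P with hN
  have hNA : N * A = 0 := by rw [hN, Matrix.sub_mul, hP, Matrix.one_mul, sub_self]
  suffices hNg : N *ᵥ g = 0 by
    rw [hN, sub_mulVec, one_mulVec, sub_eq_zero] at hNg
    rw [mulVec_mulVec, ← hNg]
  set z := Nᵀ *ᵥ (N *ᵥ g)
  have hAz : z ⬝ᵥ A *ᵥ z = 0 :=
    calc z ⬝ᵥ A *ᵥ z = (N *ᵥ g) ⬝ᵥ (N * A) *ᵥ z := by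
          rw [← mulVec_mulVec, dotProduct_mulVec _ N, ← mulVec_transpose]
      _ = 0 := by rw [hNA, zero_mulVec, dotProduct_zero]
  have hgz : g ⬝ᵥ z = (N *ᵥ g) ⬝ᵥ (N *ᵥ g) := by
    rw [dotProduct_mulVec, vecMul_transpose]
  have hle := dotProduct_mulVec_le_of_le hg z
  rw [smul_mulVec, dotProduct_smul, dotProduct_vecMulVec_self_mulVec, hAz, hgz, smul_eq_mul] at hle
  have hsq := le_antisymm (nonpos_of_mul_nonpos_right hle hc) (sq_nonneg _)
  exact dotProduct_self_eq_zero.mp (pow_eq_zero_iff two_ne_zero |>.mp hsq)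

variable [DecidableEq ι] {κ lam : ℝ}

/-- The Moore–Penrose pseudoinverse of a Hermitian matrix, through which the cost `g ⬝ᵥ B† *ᵥ g` of
a Newton step is compared with resolvents of `B`. The functional calculus inverts the nonzero
spectrum and, as `0⁻¹ = 0`, keeps the kernel; on a non-Hermitian matrix `cfc` returns `0`. -/
noncomputable def pseudoInverse (B : Matrix ι ι ℝ) : Matrix ι ι ℝ :=
  cfc (fun x : ℝ ↦ x⁻¹) B

/-- The lower bound `lam` on the nonzero spectrum of `B`, the only information on the smallest
nonzero eigenvalue that the regret bound needs. The sign of `lam` is left free. -/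
def HasSpectralGap (B : Matrix ι ι ℝ) (lam : ℝ) : Prop :=
  ∀ μ ∈ spectrum ℝ B, μ ≠ 0 → lam ≤ μ

theorem mul_pseudoInverse_mul (hB : B.IsHermitian) : B * pseudoInverse B * B = B := by
  have hself : IsSelfAdjoint B := hB
  have hcont := B.finite_real_spectrum.continuousOn (fun x : ℝ ↦ x⁻¹)
  calc B * pseudoInverse B * B
      = cfc (fun x : ℝ ↦ x) B * cfc (fun x : ℝ ↦ x⁻¹) B * cfc (fun x : ℝ ↦ x) B := by
        rw [cfc_id' ℝ B, pseudoInverse]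
    _ = cfc (fun x : ℝ ↦ x * x⁻¹ * x) B := by
        rw [← cfc_mul _ _ B, ← cfc_mul (fun x : ℝ ↦ x * x⁻¹) _ B]
    _ = B := by simp_rw [mul_inv_mul_cancel, cfc_id' ℝ B]

theorem one_add_smul_eq_cfc (hB : B.IsHermitian) (κ : ℝ) :
    1 + κ • B = cfc (fun x : ℝ ↦ 1 + κ * x) B := by
  have hself : IsSelfAdjoint B := hB
  rw [cfc_const_add (1 : ℝ) (fun x ↦ κ * x) B, cfc_const_mul κ (fun x ↦ x) B, cfc_id' ℝ B, map_one]

theorem inv_one_add_smul_eq_cfc (hB : B.PosSemidef) (hκ : 0 ≤ κ) :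
    (1 + κ • B)⁻¹ = cfc (fun x : ℝ ↦ (1 + κ * x)⁻¹) B := by
  have hself : IsSelfAdjoint B := hB.isHermitian
  have hcont := B.finite_real_spectrum.continuousOn (fun x : ℝ ↦ (1 + κ * x)⁻¹)
  apply inv_eq_right_inv
  rw [one_add_smul_eq_cfc hB.isHermitian, ← cfc_mul _ _ B, ← cfc_const_one ℝ B]
  refine cfc_congr fun x hx ↦ mul_inv_cancel₀ ?_
  have := spectrum_nonneg_of_nonneg hB.nonneg hx
  positivity

theorem pseudoInverse_le_smul_inv (hB : B.PosSemidef) (hlam : 0 < lam)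
    (hgap : HasSpectralGap B lam) (hκ : 0 ≤ κ) :
    pseudoInverse B ≤ (κ + lam⁻¹) • (1 + κ • B)⁻¹ := by
  have hcont (f : ℝ → ℝ) : ContinuousOn f (spectrum ℝ B) := B.finite_real_spectrum.continuousOn f
  rw [inv_one_add_smul_eq_cfc hB hκ, ← cfc_const_mul _ _ B (hcont _)]
  refine cfc_mono (fun x hx ↦ ?_) (hcont _) (hcont _)
  rcases eq_or_ne x 0 with rfl | hx0
  · rw [_root_.inv_zero]
    positivity
  · have hlx := hgap x hx hx0
    have hx : 0 < x := hlam.trans_le hlx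
    calc x⁻¹ = (κ + x⁻¹) * (1 + κ * x)⁻¹ := by field_simp; ring
      _ ≤ (κ + lam⁻¹) * (1 + κ * x)⁻¹ := by gcongr

theorem HasSpectralGap.mul_dotProduct_self_le (hgap : HasSpectralGap B lam) (hB : B.IsHermitian)
    (v : ι → ℝ) : lam * (B *ᵥ v ⬝ᵥ B *ᵥ v) ≤ B *ᵥ v ⬝ᵥ B *ᵥ (B *ᵥ v) := by
  have hself : IsSelfAdjoint B := hB
  have hle : lam • (B ^ 2) ≤ B ^ 3 := by
    rw [← cfc_pow_id (R := ℝ) B 2, ← cfc_pow_id (R := ℝ) B 3, ← cfc_const_mul lam _ B]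
    refine cfc_mono fun x hx ↦ ?_
    rcases eq_or_ne x 0 with rfl | hx0
    · simp
    · nlinarith [hgap x hx hx0, sq_nonneg x]
  have hcomm (z : ι → ℝ) : v ⬝ᵥ B *ᵥ z = B *ᵥ v ⬝ᵥ z := by
    rw [dotProduct_mulVec_comm_of_isSymm (isHermitian_iff_isSymm.mp hB), dotProduct_comm]
  simpa [smul_mulVec, pow_succ, ← mulVec_mulVec, hcomm] using dotProduct_mulVec_le_of_le hle v

theorem HasSpectralGap.rank_mul_le_trace (hgap : HasSpectralGap B lam) (hB : B.IsHermitian) :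
    B.rank * lam ≤ B.trace := by
  rw [hB.rank_eq_card_non_zero_eigs, Fintype.card_subtype, hB.trace_eq_sum_eigenvalues]
  simp only [RCLike.ofReal_real_eq_id, id_eq]
  rw [← sum_filter_ne_zero, ← nsmul_eq_mul]
  refine card_nsmul_le_sum _ _ _ fun i hi ↦ hgap _ ?_ (mem_filter.mp hi).2
  exact hB.eigenvalues_mem_spectrum_real i

theorem det_add_vecMulVec {R : Type*} [CommRing R] {M : Matrix ι ι R} (hM : IsUnit M.det)
    (u v : ι → R) : (M + vecMulVec u v).det = M.det * (1 + v ⬝ᵥ M⁻¹ *ᵥ u) := by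
  rw [vecMulVec_eq Unit, det_add_replicateCol_mul_replicateRow hM, Matrix.mul_assoc,
    ← replicateCol_mulVec, det_unique (n := Unit), Matrix.add_apply, one_apply_eq,
    replicateRow_mul_replicateCol_apply]

theorem det_cfc (hB : B.IsHermitian) (f : ℝ → ℝ) : (cfc f B).det = ∏ i, f (hB.eigenvalues i) := by
  rw [hB.cfc_eq, IsHermitian.cfc, Unitary.conjStarAlgAut_apply, det_mul_right_comm]
  simp

theorem sum_log_le_card_mul_log {α : Type*} {s : Finset α} {y : α → ℝ} (hy : ∀ i ∈ s, 0 < y i) :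
    ∑ i ∈ s, Real.log (y i) ≤ #s * Real.log ((∑ i ∈ s, y i) / #s) := by
  rcases s.eq_empty_or_nonempty with rfl | hs
  · simp
  have hcard : (0 : ℝ) < #s := mod_cast hs.card_pos
  have hjensen := strictConcaveOn_log_Ioi.concaveOn.le_map_sum (t := s) (p := y)
    (w := fun _ ↦ (#s : ℝ)⁻¹) (fun _ _ ↦ by positivity) (by simp [hcard.ne']) hy
  simp only [smul_eq_mul, ← mul_sum] at hjensen
  rwa [inv_mul_le_iff₀ hcard, inv_mul_eq_div] at hjensen

theorem log_det_one_add_smul_le (hB : B.PosSemidef) (hκ : 0 ≤ κ) :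
    Real.log (1 + κ • B).det ≤ B.rank * Real.log (1 + κ * B.trace / B.rank) := by
  set μ := hB.isHermitian.eigenvalues
  set S := univ.filter fun i ↦ μ i ≠ 0
  have hrank : B.rank = #S := by
    rw [hB.isHermitian.rank_eq_card_non_zero_eigs, Fintype.card_subtype]
  have htrace : ∑ i ∈ S, μ i = B.trace := by
    rw [sum_filter_ne_zero, hB.isHermitian.trace_eq_sum_eigenvalues]
    rfl
  have hpos (i : ι) : 0 < 1 + κ * μ i := by have := hB.eigenvalues_nonneg i; positivity
  calc Real.log (1 + κ • B).det = ∑ i ∈ S, Real.log (1 + κ * μ i) := by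
        rw [one_add_smul_eq_cfc hB.isHermitian, det_cfc hB.isHermitian,
          Real.log_prod fun i _ ↦ (hpos i).ne']
        refine (sum_subset (filter_subset _ _) fun i _ hi ↦ ?_).symm
        simp_all
    _ ≤ #S * Real.log ((∑ i ∈ S, (1 + κ * μ i)) / #S) := sum_log_le_card_mul_log fun i _ ↦ hpos i
    _ = B.rank * Real.log (1 + κ * B.trace / B.rank) := by
        rw [sum_add_distrib, ← mul_sum, htrace, sum_const, nsmul_one, ← hrank]
        rcases eq_or_ne (B.rank : ℝ) 0 with h | h
        · simp [h]
        · rw [add_div, div_self h]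

theorem mul_dotProduct_inv_le_log_det_sub (hB : B.PosSemidef) (hκ : 0 ≤ κ) :
    κ * (g ⬝ᵥ (1 + κ • (B + vecMulVec g g))⁻¹ *ᵥ g) ≤
      Real.log (1 + κ • (B + vecMulVec g g)).det - Real.log (1 + κ • B).det := by
  set M := 1 + κ • (B + vecMulVec g g) with hM
  have hMdet : 0 < M.det :=
    (posDef_one_add_smul (hB.add (posSemidef_vecMulVec_self g)) hκ).det_pos
  have hBdet : 0 < (1 + κ • B).det := (posDef_one_add_smul hB hκ).det_pos
  have hdown : (1 + κ • B).det = M.det * (1 - κ * (g ⬝ᵥ M⁻¹ *ᵥ g)) := by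
    rw [show 1 + κ • B = M + vecMulVec (-κ • g) g by
      rw [hM, smul_vecMulVec, smul_add, neg_smul, add_assoc, add_neg_cancel_right],
      det_add_vecMulVec hMdet.ne'.isUnit, mulVec_smul, dotProduct_smul, smul_eq_mul, neg_mul,
      sub_eq_add_neg]
  have hfactor : 0 < 1 - κ * (g ⬝ᵥ M⁻¹ *ᵥ g) := pos_of_mul_pos_right (hdown ▸ hBdet) hMdet.le
  rw [hdown, Real.log_mul hMdet.ne' hfactor.ne']
  linarith [Real.log_le_sub_one_of_pos hfactor]

theorem sq_dotProduct_le_mul_dotProduct_inv {M : Matrix ι ι ℝ} (hM : M.PosDef) (z g : ι → ℝ) :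
    (g ⬝ᵥ z) ^ 2 ≤ (z ⬝ᵥ M *ᵥ z) * (g ⬝ᵥ M⁻¹ *ᵥ g) := by
  set y := M⁻¹ *ᵥ g
  have hy : M *ᵥ y = g := by
    rw [mulVec_mulVec, mul_nonsing_inv _ hM.det_pos.ne'.isUnit, one_mulVec]
  rw [← hy, dotProduct_comm (M *ᵥ y) z, dotProduct_comm (M *ᵥ y) y]
  exact sq_dotProduct_mulVec_le hM.posSemidef z y

theorem log_le_log_det_sub_of_rank_lt (hB : B.PosSemidef) (hlam : 0 < lam)
    (hgap : HasSpectralGap (B + vecMulVec g g) lam) (hκ : 0 ≤ κ)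
    (hrank : B.rank < (B + vecMulVec g g).rank) :
    Real.log (1 + κ * lam) ≤
      Real.log (1 + κ • (B + vecMulVec g g)).det - Real.log (1 + κ • B).det := by
  obtain ⟨v, hz, hBz⟩ := exists_mulVec_ne_zero_of_rank_lt hrank
  set z := (B + vecMulVec g g) *ᵥ v
  have hB' : (B + vecMulVec g g).PosSemidef := hB.add (posSemidef_vecMulVec_self g)
  have hM := posDef_one_add_smul hB hκ
  have hz0 : 0 < z ⬝ᵥ z := by simpa using dotProduct_star_self_pos_iff.mpr hz
  have hgz : lam * (z ⬝ᵥ z) ≤ (g ⬝ᵥ z) ^ 2 := by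
    have h := hgap.mul_dotProduct_self_le hB'.isHermitian v
    rwa [add_mulVec B _ z, hBz, zero_add, dotProduct_vecMulVec_self_mulVec] at h
  have hcs := sq_dotProduct_le_mul_dotProduct_inv hM z g
  rw [add_mulVec, one_mulVec, smul_mulVec, hBz, smul_zero, add_zero, mul_comm] at hcs
  have hlam_le : lam ≤ g ⬝ᵥ (1 + κ • B)⁻¹ *ᵥ g := le_of_mul_le_mul_right (hgz.trans hcs) hz0
  have hup : (1 + κ • (B + vecMulVec g g)).det =
      (1 + κ • B).det * (1 + κ * (g ⬝ᵥ (1 + κ • B)⁻¹ *ᵥ g)) := by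
    rw [smul_add, ← add_assoc, ← smul_vecMulVec, det_add_vecMulVec hM.det_pos.ne'.isUnit,
      mulVec_smul, dotProduct_smul, smul_eq_mul]
  have hpos : 0 < 1 + κ * lam := by positivity
  have hle : 1 + κ * lam ≤ 1 + κ * (g ⬝ᵥ (1 + κ • B)⁻¹ *ᵥ g) := by gcongr
  rw [hup, Real.log_mul hM.det_pos.ne' (hpos.trans_le hle).ne', add_sub_cancel_left]
  exact Real.log_le_log hpos hle

theorem mulVec_pseudoInverse_mulVec (hB : B.IsHermitian) (hg : vecMulVec g g ≤ B) :
    B *ᵥ (pseudoInverse B *ᵥ g) = g :=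
  mulVec_mulVec_of_smul_vecMulVec_le (mul_pseudoInverse_mul hB) one_pos (by rwa [one_smul])

/-- The excess of the potential `log det (1 + κ B)` over its value for `rank B` eigenvalues sitting
at `lam`. Next to the rank itself, its increase pays for the Newton step of a rank-one update; the
regularisation `κ` tends to `∞` in the end. -/
noncomputable def logDetExcess (κ lam : ℝ) (B : Matrix ι ι ℝ) : ℝ :=
  Real.log (1 + κ • B).det - B.rank * Real.log (1 + κ * lam)

theorem dotProduct_pseudoInverse_le_logDetExcess_sub (hB : B.PosSemidef) (hlam : 0 < lam)
    (hgap : HasSpectralGap (B + vecMulVec g g) lam) (hκ : 0 < κ) :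
    g ⬝ᵥ pseudoInverse (B + vecMulVec g g) *ᵥ g ≤
      ((B + vecMulVec g g).rank - B.rank) + (1 + (κ * lam)⁻¹) *
        (logDetExcess κ lam (B + vecMulVec g g) - logDetExcess κ lam B) := by
  have hG := posSemidef_vecMulVec_self g
  have hB' : (B + vecMulVec g g).PosSemidef := hB.add hG
  unfold logDetExcess
  rcases (rank_le_rank_of_le hB (le_add_of_nonneg_right hG.nonneg)).eq_or_lt with hrank | hrank
  · have hle := dotProduct_mulVec_le_of_le (pseudoInverse_le_smul_inv hB' hlam hgap hκ.le) g
    have hlog := mul_dotProduct_inv_le_log_det_sub (g := g) hB hκ.le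
    rw [smul_mulVec, dotProduct_smul, smul_eq_mul] at hle
    rw [← hrank, sub_self, zero_add, sub_sub_sub_cancel_right]
    calc _ ≤ _ := hle
      _ = (1 + (κ * lam)⁻¹) * (κ * (g ⬝ᵥ (1 + κ • (B + vecMulVec g g))⁻¹ *ᵥ g)) := by field_simp
      _ ≤ _ := by gcongr
  · have hlog := log_le_log_det_sub_of_rank_lt hB hlam hgap hκ.le hrank
    have hone : (B + vecMulVec g g).rank = B.rank + 1 :=
      le_antisymm ((rank_add_le_rank_add_rank _ _).trans (by grw [rank_vecMulVec_le])) hrank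
    calc g ⬝ᵥ pseudoInverse (B + vecMulVec g g) *ᵥ g ≤ 1 :=
          dotProduct_le_one_of_vecMulVec_le (le_add_of_nonneg_left hB.nonneg)
            (mulVec_pseudoInverse_mulVec hB'.isHermitian (le_add_of_nonneg_left hB.nonneg))
      _ ≤ _ := by
        rw [hone, Nat.cast_succ, add_sub_cancel_left]
        refine le_add_of_nonneg_right (mul_nonneg (by positivity) ?_)
        linarith

/-- The weighted Gram matrix `∑_{1 ≤ s ≤ t} c_s g_s g_sᵀ`: it is the matrix `A_t` of the Newton step
for `c = η`, and the unweighted `Â_t` for `c = 1`. -/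
def weightedGram {ι : Type*} (c : ℕ → ℝ) (g : ℕ → ι → ℝ) (t : ℕ) : Matrix ι ι ℝ :=
  ∑ s ∈ Icc 1 t, c s • vecMulVec (g s) (g s)

section WeightedGram

variable {ι : Type*} {c c' : ℕ → ℝ} {g : ℕ → ι → ℝ} {s t : ℕ}

theorem weightedGram_zero (c : ℕ → ℝ) (g : ℕ → ι → ℝ) : weightedGram c g 0 = 0 := by
  simp [weightedGram]

theorem weightedGram_succ (c : ℕ → ℝ) (g : ℕ → ι → ℝ) (t : ℕ) :
    weightedGram c g (t + 1) =
      weightedGram c g t + c (t + 1) • vecMulVec (g (t + 1)) (g (t + 1)) :=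
  sum_Icc_succ_top (Nat.le_add_left 1 t) _

theorem weightedGram_one_succ (g : ℕ → ι → ℝ) (t : ℕ) :
    weightedGram 1 g (t + 1) = weightedGram 1 g t + vecMulVec (g (t + 1)) (g (t + 1)) := by
  rw [weightedGram_succ, Pi.one_apply, one_smul]

theorem smul_weightedGram_one (a : ℝ) (g : ℕ → ι → ℝ) (t : ℕ) :
    a • weightedGram 1 g t = weightedGram (fun _ ↦ a) g t := by
  simp [weightedGram, smul_sum]

section

variable [Finite ι]

theorem weightedGram_posSemidef (hc : ∀ s ∈ Icc 1 t, 0 ≤ c s) : (weightedGram c g t).PosSemidef :=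
  posSemidef_sum _ fun s hs ↦ (posSemidef_vecMulVec_self (g s)).smul (hc s hs)

theorem weightedGram_mono (hc : ∀ s ∈ Icc 1 t, c s ≤ c' s) :
    weightedGram c g t ≤ weightedGram c' g t := by
  cases nonempty_fintype ι
  exact sum_le_sum fun s hs ↦
    smul_le_smul_of_nonneg_right (hc s hs) (posSemidef_vecMulVec_self (g s)).nonneg

theorem smul_vecMulVec_le_weightedGram (hc : ∀ s ∈ Icc 1 t, 0 ≤ c s) (hs : s ∈ Icc 1 t) :
    c s • vecMulVec (g s) (g s) ≤ weightedGram c g t :=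
  single_le_sum (f := fun s ↦ c s • vecMulVec (g s) (g s))
    (fun s hs ↦ ((posSemidef_vecMulVec_self (g s)).smul (hc s hs)).nonneg) hs

end

variable [Fintype ι]

theorem trace_weightedGram_one (g : ℕ → ι → ℝ) (t : ℕ) :
    (weightedGram 1 g t).trace = ∑ s ∈ Icc 1 t, g s ⬝ᵥ g s := by
  simp [weightedGram, trace_sum, trace_vecMulVec]

variable [DecidableEq ι] {lam κ : ℝ} {T : ℕ}

theorem sum_dotProduct_pseudoInverse_le_logDetExcess (hlam : 0 < lam)
    (hgap : ∀ t ∈ Icc 1 T, HasSpectralGap (weightedGram 1 g t) lam) (hκ : 0 < κ) :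
    ∑ t ∈ Icc 1 T, g t ⬝ᵥ pseudoInverse (weightedGram 1 g t) *ᵥ g t ≤
      (weightedGram 1 g T).rank +
        (1 + (κ * lam)⁻¹) * logDetExcess κ lam (weightedGram 1 g T) := by
  induction T with
  | zero => simp [weightedGram_zero, logDetExcess]
  | succ n ih =>
    have hstep := dotProduct_pseudoInverse_le_logDetExcess_sub (g := g (n + 1))
      (weightedGram_posSemidef (c := 1) (g := g) (t := n) fun _ _ ↦ zero_le_one) hlam
      (weightedGram_one_succ g n ▸ hgap (n + 1) (right_mem_Icc.mpr (Nat.le_add_left 1 n))) hκ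
    have ih := ih fun t ht ↦ hgap t (Icc_subset_Icc_right n.le_succ ht)
    rw [sum_Icc_succ_top (Nat.le_add_left 1 n)]
    rw [← weightedGram_one_succ] at hstep
    linarith

theorem logDetExcess_le_mul_log {B : Matrix ι ι ℝ} (hB : B.PosSemidef) (hlam : 0 < lam)
    (hgap : HasSpectralGap B lam) (hrank : 0 < B.rank) (hκ : 0 ≤ κ) :
    logDetExcess κ lam B ≤ B.rank * Real.log (B.trace / (B.rank * lam)) := by
  have hr : (0 : ℝ) < B.rank := mod_cast hrank
  have htrace := hgap.rank_mul_le_trace hB.isHermitian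
  have htrace0 : 0 < B.trace := (mul_pos hr hlam).trans_le htrace
  have hratio : 1 + κ * B.trace / B.rank ≤ B.trace / (B.rank * lam) * (1 + κ * lam) := by
    have hone : 1 ≤ B.trace / (B.rank * lam) := (one_le_div (by positivity)).mpr htrace
    calc 1 + κ * B.trace / B.rank
        ≤ B.trace / (B.rank * lam) + κ * B.trace / B.rank := by gcongr
      _ = B.trace / (B.rank * lam) * (1 + κ * lam) := by field_simp
  have hlog := Real.log_le_log (by positivity) hratio
  rw [Real.log_mul (by positivity) (by positivity)] at hlog
  rw [logDetExcess, sub_le_iff_le_add, ← mul_add]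
  exact (log_det_one_add_smul_le hB hκ).trans (by gcongr)

theorem sum_dotProduct_pseudoInverse_le (hlam : 0 < lam)
    (hgap : ∀ t ∈ Icc 1 T, HasSpectralGap (weightedGram 1 g t) lam)
    (hg : ∃ t ∈ Icc 1 T, g t ≠ 0) :
    ∑ t ∈ Icc 1 T, g t ⬝ᵥ pseudoInverse (weightedGram 1 g t) *ᵥ g t ≤
      (weightedGram 1 g T).rank + (weightedGram 1 g T).rank *
        Real.log ((∑ t ∈ Icc 1 T, g t ⬝ᵥ g t) / ((weightedGram 1 g T).rank * lam)) := by
  obtain ⟨t, ht, hgt⟩ := hg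
  have hT : T ∈ Icc 1 T := right_mem_Icc.mpr (nonempty_Icc.mp ⟨t, ht⟩)
  have hB : (weightedGram 1 g T).PosSemidef := weightedGram_posSemidef fun _ _ ↦ zero_le_one
  have hrank : 0 < (weightedGram 1 g T).rank := by
    have hle := smul_vecMulVec_le_weightedGram (c := 1) (g := g) (fun _ _ ↦ zero_le_one) ht
    rw [Pi.one_apply, one_smul] at hle
    exact (rank_vecMulVec_self_pos hgt).trans_le
      (rank_le_rank_of_le (posSemidef_vecMulVec_self _) hle)
  rw [← trace_weightedGram_one]
  set B := weightedGram 1 g T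
  have hbound (κ : ℝ) (hκ : 0 < κ) :
      ∑ t ∈ Icc 1 T, g t ⬝ᵥ pseudoInverse (weightedGram 1 g t) *ᵥ g t ≤
        B.rank + (1 + (κ * lam)⁻¹) * (B.rank * Real.log (B.trace / (B.rank * lam))) := by
    grw [sum_dotProduct_pseudoInverse_le_logDetExcess hlam hgap hκ,
      logDetExcess_le_mul_log hB hlam (hgap T hT) hrank hκ.le]
  have hlim : Filter.Tendsto (fun κ : ℝ ↦
      B.rank + (1 + (κ * lam)⁻¹) * (B.rank * Real.log (B.trace / (B.rank * lam)))) Filter.atTop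
      (nhds (B.rank + (1 + 0) * (B.rank * Real.log (B.trace / (B.rank * lam))))) :=
    ((tendsto_const_nhds.add (Filter.tendsto_id.atTop_mul_const hlam).inv_tendsto_atTop).mul_const
      _).const_add _
  rw [add_zero, one_mul] at hlim
  exact ge_of_tendsto hlim (Filter.eventually_gt_atTop 0 |>.mono hbound)

end WeightedGram

section Newton

variable {ι : Type*} [Fintype ι] {A : Matrix ι ι ℝ} {S : Set (ι → ℝ)} {w u v p g : ι → ℝ}

theorem dotProduct_mulVec_sub_nonneg_of_isMinOn (hA : A.PosSemidef) (hS : Convex ℝ S) (hw : w ∈ S)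
    (hmin : IsMinOn (fun z ↦ (z - u) ⬝ᵥ A *ᵥ (z - u)) S w) (hv : v ∈ S) :
    0 ≤ (w - u) ⬝ᵥ A *ᵥ (v - w) := by
  set b := (w - u) ⬝ᵥ A *ᵥ (v - w) with hb
  set q := (v - w) ⬝ᵥ A *ᵥ (v - w)
  have hcomm : (v - w) ⬝ᵥ A *ᵥ (w - u) = b :=
    dotProduct_mulVec_comm_of_isSymm (isHermitian_iff_isSymm.mp hA.isHermitian) _ _
  have hsegment (ε : ℝ) (hε : 0 < ε) (hε1 : ε ≤ 1) : 0 ≤ 2 * b + ε * q := by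
    have h := isMinOn_iff.mp hmin _ (hS.add_smul_sub_mem hw hv ⟨hε.le, hε1⟩)
    rw [add_sub_right_comm] at h
    simp only [mulVec_add, mulVec_smul, dotProduct_add, add_dotProduct, dotProduct_smul,
      smul_dotProduct, smul_eq_mul, hcomm, ← hb] at h
    refine nonneg_of_mul_nonneg_right (a := ε) ?_ hε
    linarith
  have hlim : Filter.Tendsto (fun n : ℕ ↦ 2 * b + 1 / ((n : ℝ) + 1) * q) Filter.atTop
      (nhds (2 * b + 0 * q)) :=
    (tendsto_one_div_add_atTop_nhds_zero_nat.mul_const q).const_add _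
  have h := ge_of_tendsto' hlim fun n ↦ hsegment _ Nat.one_div_pos_of_nat
    ((div_le_one (by positivity)).mpr (by simp))
  linarith

theorem dotProduct_mulVec_sub_le_of_isMinOn (hA : A.PosSemidef) (hS : Convex ℝ S) (hw : w ∈ S)
    (hmin : IsMinOn (fun z ↦ (z - u) ⬝ᵥ A *ᵥ (z - u)) S w) (hv : v ∈ S) :
    (w - v) ⬝ᵥ A *ᵥ (w - v) ≤ (u - v) ⬝ᵥ A *ᵥ (u - v) := by
  have hopt := dotProduct_mulVec_sub_nonneg_of_isMinOn hA hS hw hmin hv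
  have hsq := hA.dotProduct_mulVec_nonneg (w - u)
  have hcomm := dotProduct_mulVec_comm_of_isSymm (isHermitian_iff_isSymm.mp hA.isHermitian)
    (v - w) (w - u)
  rw [star_trivial] at hsq
  rw [show u - v = -((w - u) + (v - w)) by abel, show w - v = -(v - w) by abel]
  simp only [mulVec_neg, neg_dotProduct_neg, mulVec_add, dotProduct_add, add_dotProduct]
  linarith

theorem sub_dotProduct_mulVec_sub_of_mulVec_eq (hA : A.IsSymm) (hp : A *ᵥ p = g) (v : ι → ℝ) :
    (v - p) ⬝ᵥ A *ᵥ (v - p) = v ⬝ᵥ A *ᵥ v - 2 * (g ⬝ᵥ v) + g ⬝ᵥ p := by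
  have hcross : p ⬝ᵥ A *ᵥ v = g ⬝ᵥ v := by
    rw [dotProduct_mulVec_comm_of_isSymm hA, hp, dotProduct_comm]
  simp only [mulVec_sub, dotProduct_sub, sub_dotProduct, hcross, hp, dotProduct_comm _ g]
  ring

theorem convex_abs_dotProduct_le (x : ι → ℝ) (C : ℝ) : Convex ℝ {z | |z ⬝ᵥ x| ≤ C} := by
  simp_rw [abs_le, Set.ofPred_and]
  have hlin : IsLinearMap ℝ fun z ↦ z ⬝ᵥ x := ⟨fun y z ↦ add_dotProduct y z x,
    fun a z ↦ smul_dotProduct a z x⟩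
  exact (convex_halfSpace_ge hlin _).inter (convex_halfSpace_le hlin _)

variable {c : ℕ → ℝ} {w u p g : ℕ → ι → ℝ} {T : ℕ}

theorem two_mul_sum_dotProduct_sub_add_le (hc : ∀ t ∈ Icc 1 T, 0 ≤ c t)
    (hp : ∀ t ∈ Icc 1 T, weightedGram c g t *ᵥ p t = g t)
    (hu : ∀ t ∈ Icc 1 T, u (t + 1) = w t - p t)
    (hproj : ∀ t ∈ Ico 1 T, (w (t + 1) - v) ⬝ᵥ weightedGram c g t *ᵥ (w (t + 1) - v) ≤
      (u (t + 1) - v) ⬝ᵥ weightedGram c g t *ᵥ (u (t + 1) - v)) :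
    2 * ∑ t ∈ Icc 1 T, g t ⬝ᵥ (w t - v) +
        (u (T + 1) - v) ⬝ᵥ weightedGram c g T *ᵥ (u (T + 1) - v) ≤
      ∑ t ∈ Icc 1 T, g t ⬝ᵥ p t + ∑ t ∈ Icc 1 T, c t * (g t ⬝ᵥ (w t - v)) ^ 2 := by
  induction T with
  | zero => simp [weightedGram_zero]
  | succ n ih =>
    have hsub := Icc_subset_Icc_right (a := 1) n.le_succ
    have hlast : n + 1 ∈ Icc 1 (n + 1) := right_mem_Icc.mpr (Nat.le_add_left 1 n)
    have ih := ih (fun t ht ↦ hc t (hsub ht)) (fun t ht ↦ hp t (hsub ht))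
      (fun t ht ↦ hu t (hsub ht)) fun t ht ↦ hproj t (Ico_subset_Ico_right n.le_succ ht)
    have hprev : (w (n + 1) - v) ⬝ᵥ weightedGram c g n *ᵥ (w (n + 1) - v) ≤
        (u (n + 1) - v) ⬝ᵥ weightedGram c g n *ᵥ (u (n + 1) - v) := by
      rcases n.eq_zero_or_pos with rfl | hn
      · simp [weightedGram_zero]
      · exact hproj n (mem_Ico.mpr ⟨hn, n.lt_succ_self⟩)
    have hquad : (w (n + 1) - v) ⬝ᵥ weightedGram c g (n + 1) *ᵥ (w (n + 1) - v) =
        (w (n + 1) - v) ⬝ᵥ weightedGram c g n *ᵥ (w (n + 1) - v) +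
          c (n + 1) * (g (n + 1) ⬝ᵥ (w (n + 1) - v)) ^ 2 := by
      rw [weightedGram_succ, add_mulVec, smul_mulVec, dotProduct_add, dotProduct_smul,
        dotProduct_vecMulVec_self_mulVec, smul_eq_mul]
    have hstep := sub_dotProduct_mulVec_sub_of_mulVec_eq
      (isHermitian_iff_isSymm.mp (weightedGram_posSemidef hc).isHermitian) (hp _ hlast)
      (w (n + 1) - v)
    rw [hu _ hlast, sub_right_comm, hstep]
    simp only [sum_Icc_succ_top (Nat.le_add_left 1 n)]
    linarith

variable {P : ℕ → Matrix ι ι ℝ} {a lam : ℝ}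

theorem weightedGram_mulVec_mulVec (hc : ∀ t ∈ Icc 1 T, 0 < c t)
    (hP : ∀ t ∈ Icc 1 T, weightedGram c g t * P t * weightedGram c g t = weightedGram c g t) {t : ℕ}
    (ht : t ∈ Icc 1 T) : weightedGram c g t *ᵥ (P t *ᵥ g t) = g t := by
  obtain ⟨h1, hT⟩ := mem_Icc.mp ht
  have hc' (s) (hs : s ∈ Icc 1 t) : 0 ≤ c s := (hc s (Icc_subset_Icc_right hT hs)).le
  exact mulVec_mulVec_of_smul_vecMulVec_le (hP t ht) (hc t ht)
    (smul_vecMulVec_le_weightedGram hc' (right_mem_Icc.mpr h1))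

variable [DecidableEq ι]

theorem mul_sum_dotProduct_le (ha : 0 < a) (hac : ∀ t ∈ Icc 1 T, a ≤ c t)
    (hp : ∀ t ∈ Icc 1 T, weightedGram c g t *ᵥ p t = g t) :
    a * ∑ t ∈ Icc 1 T, g t ⬝ᵥ p t ≤
      ∑ t ∈ Icc 1 T, g t ⬝ᵥ pseudoInverse (weightedGram 1 g t) *ᵥ g t := by
  rw [mul_sum]
  refine sum_le_sum fun t ht ↦ ?_
  obtain ⟨h1, hT⟩ := mem_Icc.mp ht
  have hB : (weightedGram 1 g t).PosSemidef := weightedGram_posSemidef fun _ _ ↦ zero_le_one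
  have hg := smul_vecMulVec_le_weightedGram (c := 1) (g := g) (fun _ _ ↦ zero_le_one)
    (right_mem_Icc.mpr h1)
  rw [Pi.one_apply, one_smul] at hg
  have hle : a • weightedGram 1 g t ≤ weightedGram c g t := by
    rw [smul_weightedGram_one]
    exact weightedGram_mono fun s hs ↦ hac s (Icc_subset_Icc_right hT hs)
  have hpinv : (a • weightedGram 1 g t) *ᵥ (a⁻¹ • pseudoInverse (weightedGram 1 g t) *ᵥ g t) =
      g t := by
    rw [mulVec_smul, smul_mulVec, inv_smul_smul₀ ha.ne',
      mulVec_pseudoInverse_mulVec hB.isHermitian hg]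
  have h := dotProduct_le_dotProduct_of_mulVec_eq (hB.smul ha.le) hle (hp t ht) hpinv
  rwa [dotProduct_smul, smul_eq_mul, ← div_eq_inv_mul, le_div_iff₀' ha] at h

theorem two_mul_sum_dotProduct_sub_le {x : ℕ → ι → ℝ} {C : ℝ} (hlam : 0 < lam) (ha : 0 < a)
    (hac : ∀ t ∈ Icc 1 T, a ≤ c t) (hg : ∃ t ∈ Icc 1 T, g t ≠ 0)
    (hgap : ∀ t ∈ Icc 1 T, HasSpectralGap (weightedGram 1 g t) lam)
    (hP : ∀ t ∈ Icc 1 T, weightedGram c g t * P t * weightedGram c g t = weightedGram c g t)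
    (hu : ∀ t ∈ Icc 1 T, u (t + 1) = w t - P t *ᵥ g t)
    (hw : ∀ t ∈ Ico 1 T, |w (t + 1) ⬝ᵥ x (t + 1)| ≤ C)
    (hmin : ∀ t ∈ Ico 1 T, IsMinOn
      (fun z ↦ (z - u (t + 1)) ⬝ᵥ weightedGram c g t *ᵥ (z - u (t + 1)))
      {z | |z ⬝ᵥ x (t + 1)| ≤ C} (w (t + 1)))
    (hv : ∀ t ∈ Icc 1 T, |v ⬝ᵥ x t| ≤ C) :
    2 * ∑ t ∈ Icc 1 T, g t ⬝ᵥ (w t - v) ≤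
      a⁻¹ * ((weightedGram 1 g T).rank + (weightedGram 1 g T).rank *
        Real.log ((∑ t ∈ Icc 1 T, g t ⬝ᵥ g t) / ((weightedGram 1 g T).rank * lam))) +
      ∑ t ∈ Icc 1 T, c t * (g t ⬝ᵥ (w t - v)) ^ 2 := by
  have hc (t) (ht : t ∈ Icc 1 T) : 0 < c t := ha.trans_le (hac t ht)
  have hpos (t) (ht : t ≤ T) : (weightedGram c g t).PosSemidef :=
    weightedGram_posSemidef fun s hs ↦ (hc s (Icc_subset_Icc_right ht hs)).le
  have hp (t) (ht : t ∈ Icc 1 T) := weightedGram_mulVec_mulVec hc hP ht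
  have hregret := two_mul_sum_dotProduct_sub_add_le (v := v) (fun t ht ↦ (hc t ht).le) hp hu
    fun t ht ↦ by
      obtain ⟨-, htT⟩ := mem_Ico.mp ht
      exact dotProduct_mulVec_sub_le_of_isMinOn (hpos t htT.le) (convex_abs_dotProduct_le _ _)
        (hw t ht) (hmin t ht) (hv _ (mem_Icc.mpr ⟨Nat.le_add_left 1 t, htT⟩))
  have hlast := (hpos T le_rfl).dotProduct_mulVec_nonneg (u (T + 1) - v)
  rw [star_trivial] at hlast
  have hfirst := (mul_sum_dotProduct_le ha hac hp).trans
    (sum_dotProduct_pseudoInverse_le hlam hgap hg)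
  rw [← le_inv_mul_iff₀ ha] at hfirst
  linarith

end Newton

end LoewnerOrder

theorem sub_le_deriv_mul_sub_of_convexOn {S : Set ℝ} {f : ℝ → ℝ} {a b : ℝ} (hf : ConvexOn ℝ S f)
    (ha : a ∈ S) (hb : b ∈ S) (hd : DifferentiableAt ℝ f a) : f a - f b ≤ deriv f a * (a - b) := by
  rcases lt_trichotomy a b with hab | rfl | hab
  · have h := hf.le_slope_of_hasDerivAt ha hb hab hd.hasDerivAt
    rw [slope_def_field, le_div_iff₀ (sub_pos.mpr hab)] at h
    linarith
  · simp
  · have h := hf.slope_le_of_hasDerivAt hb ha hab hd.hasDerivAt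
    rwa [slope_def_field, div_le_iff₀ (sub_pos.mpr hab)] at h

theorem sum_one_div_sqrt_le (T : ℕ) : ∑ t ∈ Icc 1 T, 1 / √(t : ℝ) ≤ 2 * √(T : ℝ) := by
  induction T with
  | zero => simp
  | succ n ih =>
    have hstep : 1 / √((n + 1 : ℕ) : ℝ) ≤ 2 * (√((n + 1 : ℕ) : ℝ) - √(n : ℝ)) := by
      have hn := Real.sq_sqrt (Nat.cast_nonneg (α := ℝ) n)
      have hn' := Real.sq_sqrt (Nat.cast_nonneg (α := ℝ) (n + 1))
      rw [div_le_iff₀ (by positivity)]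
      push_cast at *
      nlinarith [sq_nonneg (√((n : ℝ) + 1) - √(n : ℝ))]
    rw [sum_Icc_succ_top (Nat.le_add_left 1 n)]
    linarith

theorem mul_log_div_le_mul_log_one_add_div {a b y : ℝ} (ha : 0 < a) (hab : a ≤ b) (hy : 0 < y) :
    a * Real.log (y / a) ≤ b * Real.log (1 + y / b) := by
  have hb : 0 < b := ha.trans_le hab
  have hbernoulli : 1 + y / a ≤ (1 + y / b) ^ (b / a) := by
    have h := one_add_mul_self_le_rpow_one_add (s := y / b) (by linarith [div_pos hy hb])
      ((one_le_div ha).mpr hab)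
    rwa [div_mul_div_comm, mul_comm b, mul_div_mul_right _ _ hb.ne'] at h
  calc a * Real.log (y / a) ≤ a * Real.log ((1 + y / b) ^ (b / a)) := by
        gcongr
        linarith
    _ = b * Real.log (1 + y / b) := by
        rw [Real.log_rpow (by positivity), ← mul_assoc, mul_div_cancel₀ _ ha.ne']

theorem mul_log_div_le_mul_log_one_add_two_mul {r : ℕ} {G lam : ℝ} (hG : 0 ≤ G) (hlam : 0 < lam) :
    r * Real.log (G / (r * lam)) ≤
      (1 + (r : ℝ)) * r / 2 * Real.log (1 + 2 * G / ((1 + (r : ℝ)) * r * lam)) := by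
  rcases r.eq_zero_or_pos with rfl | hr
  · simp
  rcases hG.eq_or_lt with rfl | hG
  · simp
  have hr : (1 : ℝ) ≤ r := mod_cast hr
  have h := mul_log_div_le_mul_log_one_add_div (a := r) (b := (1 + r) * r / 2) (y := G / lam)
    (by positivity) (by nlinarith) (by positivity)
  rwa [div_div, mul_comm lam, show G / lam / ((1 + r) * r / 2) = 2 * G / ((1 + r) * r * lam) by
    field_simp] at h

theorem hasSpectralGap_of_eigenvalues {ι : Type*} [Fintype ι] [DecidableEq ι] {B : Matrix ι ι ℝ}
    {lam : ℝ} (hB : B.IsHermitian)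
    (h : ∀ i, hB.eigenvalues i ≠ 0 → lam ≤ hB.eigenvalues i) : HasSpectralGap B lam := by
  rintro _ hμ hμ0
  rw [hB.spectrum_real_eq_range_eigenvalues] at hμ
  obtain ⟨i, rfl⟩ := hμ
  exact h i hμ0

theorem sum_sqrt_div_mul_sq_le {D C L : ℝ} {T : ℕ} {η y : ℕ → ℝ} (hC : 0 < C) (hL : 0 < L)
    (hη : ∀ t ∈ Icc 1 T, η t = 1 / (C * L) * √(D / t)) (hy : ∀ t ∈ Icc 1 T, |y t| ≤ 2 * C * L) :
    ∑ t ∈ Icc 1 T, η t * y t ^ 2 ≤ 8 * C * L * √(T * D) := by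
  have hterm (t) (ht : t ∈ Icc 1 T) : η t * y t ^ 2 ≤ 4 * C * L * √D * (1 / √(t : ℝ)) := by
    have hsq : y t ^ 2 ≤ (2 * C * L) ^ 2 := sq_le_sq.mpr ((hy t ht).trans (le_abs_self _))
    calc η t * y t ^ 2 ≤ 1 / (C * L) * √(D / t) * (2 * C * L) ^ 2 := by rw [hη t ht]; gcongr
      _ = 4 * C * L * √D * (1 / √(t : ℝ)) := by
        rw [Real.sqrt_div' _ t.cast_nonneg]
        field_simp
        ring
  calc ∑ t ∈ Icc 1 T, η t * y t ^ 2 ≤ 4 * C * L * √D * ∑ t ∈ Icc 1 T, 1 / √(t : ℝ) := by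
        rw [mul_sum]
        exact sum_le_sum hterm
    _ ≤ 4 * C * L * √D * (2 * √T) := by gcongr; exact sum_one_div_sqrt_le T
    _ = 8 * C * L * √(T * D) := by rw [Real.sqrt_mul T.cast_nonneg]; ring

theorem abs_smul_dotProduct_sub_le {ι : Type*} [Fintype ι] {C L b : ℝ} {w v x : ι → ℝ}
    (hb : |b| ≤ L) (hw : |w ⬝ᵥ x| ≤ C) (hv : |v ⬝ᵥ x| ≤ C) :
    |(b • x) ⬝ᵥ (w - v)| ≤ 2 * C * L := by
  have hsub : |w ⬝ᵥ x - v ⬝ᵥ x| ≤ 2 * C := (abs_sub _ _).trans (by linarith)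
  rw [smul_dotProduct, dotProduct_sub, dotProduct_comm x w, dotProduct_comm x v, smul_eq_mul,
    abs_mul, mul_comm (2 * C)]
  gcongr
  exact (abs_nonneg b).trans hb

theorem forall_mem_Icc_of_one_of_succ {p : ℕ → Prop} {T : ℕ} (h1 : p 1)
    (hsucc : ∀ t ∈ Ico 1 T, p (t + 1)) : ∀ t ∈ Icc 1 T, p t := by
  rintro (_ | _ | t) ht
  · simp at ht
  · exact h1
  · exact hsucc (t + 1) (mem_Ico.mpr ⟨Nat.le_add_left 1 t, (mem_Icc.mp ht).2⟩)

theorem invariant_newton_convex_case_general {ι : Type*} [Fintype ι] [DecidableEq ι]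
    {T : ℕ} {C L D lam : ℝ} (hC : 0 < C) (hL : 0 < L) (hD : 0 < D) (hlam : 0 < lam)
    {x : ℕ → ι → ℝ} {ℓ : ℕ → ℝ → ℝ} {η : ℕ → ℝ}
    (hconv : ∀ t ∈ Icc 1 T, ConvexOn ℝ (Set.Icc (-C) C) (ℓ t))
    (hdiff : ∀ t ∈ Icc 1 T, ∀ z, |z| ≤ C → DifferentiableAt ℝ (ℓ t) z)
    (hLip : ∀ t ∈ Icc 1 T, ∀ z, |z| ≤ C → |deriv (ℓ t) z| ≤ L)
    (hη : ∀ t ∈ Icc 1 T, η t = 1 / (C * L) * √(D / t))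
    {w u g : ℕ → ι → ℝ} (hg : ∀ t ∈ Icc 1 T, g t = deriv (ℓ t) (w t ⬝ᵥ x t) • x t)
    (hgne : ∃ t ∈ Icc 1 T, g t ≠ 0)
    (hgap : ∀ t ∈ Icc 1 T, HasSpectralGap (weightedGram 1 g t) lam)
    {P : ℕ → Matrix ι ι ℝ}
    (hP : ∀ t ∈ Icc 1 T, weightedGram η g t * P t * weightedGram η g t = weightedGram η g t)
    (hw1 : |w 1 ⬝ᵥ x 1| ≤ C)
    (hu : ∀ t ∈ Icc 1 T, u (t + 1) = w t - P t *ᵥ g t)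
    (hproj : ∀ t ∈ Ico 1 T, |w (t + 1) ⬝ᵥ x (t + 1)| ≤ C ∧ ∀ z, |z ⬝ᵥ x (t + 1)| ≤ C →
      √((w (t + 1) - u (t + 1)) ⬝ᵥ weightedGram η g t *ᵥ (w (t + 1) - u (t + 1))) ≤
        √((z - u (t + 1)) ⬝ᵥ weightedGram η g t *ᵥ (z - u (t + 1))))
    {v : ι → ℝ} (hv : ∀ t ∈ Icc 1 T, |v ⬝ᵥ x t| ≤ C) :
    ∑ t ∈ Icc 1 T, (ℓ t (w t ⬝ᵥ x t) - ℓ t (v ⬝ᵥ x t)) ≤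
      C * L / 2 * √(T / D) * ((weightedGram 1 g T).rank + (weightedGram 1 g T).rank *
        Real.log ((∑ t ∈ Icc 1 T, g t ⬝ᵥ g t) / ((weightedGram 1 g T).rank * lam))) +
      4 * C * L * √(T * D) := by
  have hT : 0 < T := let ⟨_, ht, _⟩ := hgne; nonempty_Icc.mp ⟨_, ht⟩
  have hw : ∀ t ∈ Icc 1 T, |w t ⬝ᵥ x t| ≤ C :=
    forall_mem_Icc_of_one_of_succ hw1 fun t ht ↦ (hproj t ht).1
  have hηle (t) (ht : t ∈ Icc 1 T) : 1 / (C * L) * √(D / T) ≤ η t := by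
    obtain ⟨h1, hT⟩ := mem_Icc.mp ht
    have : (0 : ℝ) < t := mod_cast h1
    rw [hη t ht]
    gcongr
  have hη0 : 0 < 1 / (C * L) * √(D / T) := by positivity
  have hlinear (t) (ht : t ∈ Icc 1 T) :
      ℓ t (w t ⬝ᵥ x t) - ℓ t (v ⬝ᵥ x t) ≤ g t ⬝ᵥ (w t - v) := by
    rw [hg t ht, smul_dotProduct, dotProduct_sub, dotProduct_comm (x t), dotProduct_comm (x t)]
    exact sub_le_deriv_mul_sub_of_convexOn (hconv t ht) (abs_le.mp (hw t ht)) (abs_le.mp (hv t ht))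
      (hdiff t ht _ (hw t ht))
  have hsecond : ∑ t ∈ Icc 1 T, η t * (g t ⬝ᵥ (w t - v)) ^ 2 ≤ 8 * C * L * √(T * D) :=
    sum_sqrt_div_mul_sq_le hC hL hη fun t ht ↦ by
      rw [hg t ht]
      exact abs_smul_dotProduct_sub_le (hLip t ht _ (hw t ht)) (hw t ht) (hv t ht)
  have hmin (t) (ht : t ∈ Ico 1 T) : IsMinOn
      (fun z ↦ (z - u (t + 1)) ⬝ᵥ weightedGram η g t *ᵥ (z - u (t + 1)))
      {z | |z ⬝ᵥ x (t + 1)| ≤ C} (w (t + 1)) := by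
    have hpos : (weightedGram η g t).PosSemidef := weightedGram_posSemidef fun s hs ↦
      hη0.le.trans (hηle s (Icc_subset_Icc_right (mem_Ico.mp ht).2.le hs))
    exact isMinOn_iff.mpr fun z hz ↦ (Real.sqrt_le_sqrt_iff
      (star_trivial (z - u (t + 1)) ▸ hpos.dotProduct_mulVec_nonneg _)).mp ((hproj t ht).2 z hz)
  have hregret := two_mul_sum_dotProduct_sub_le hlam hη0 hηle hgne hgap hP hu
    (fun t ht ↦ (hproj t ht).1) hmin hv
  rw [mul_inv, one_div, inv_inv, ← Real.sqrt_inv, inv_div] at hregret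
  linarith [sum_le_sum hlinear]

/-- **Corollary (invariant algorithm, convex case).** The truly invariant online Newton
algorithm: `A_t = Σ_{s≤t}(σ_s+η_s) g_s g_sᵀ`, `u_{t+1} = w_t − A_t† g_t`,
`w_{t+1} = argmin_{w∈K_{t+1}} ‖w−u_{t+1}‖_{A_t}`, with `σ_t = 0` and
`η_t = (1/(CL))√(d/t)`. With `λ*` the minimum of the smallest nonzero eigenvalues of
`Â_t = Σ_{s≤t} g_s g_sᵀ` and `r = rank(Â_T)`, for every `w ∈ K`:
`R_T(w) ≤ (CL/2)√(T/d)(r + ((1+r)r/2) ln(1 + 2Σ‖g_t‖₂²/((1+r)rλ*))) + 4CL√(Td)`. -/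
theorem invariant_newton_convex_case
    (d T : ℕ) (C L : ℝ) (hC : 0 < C) (hL : 0 < L)
    (x : ℕ → Fin d → ℝ) (ℓ : ℕ → ℝ → ℝ) (σ η : ℕ → ℝ)
    (hconv : ∀ t ∈ Finset.Icc 1 T, ConvexOn ℝ Set.univ (ℓ t))
    (hdiff : ∀ t ∈ Finset.Icc 1 T, Differentiable ℝ (ℓ t))
    -- Scalar Lipschitz assumption
    (hLip : ∀ t ∈ Finset.Icc 1 T, ∀ z : ℝ, |z| ≤ C → |deriv (ℓ t) z| ≤ L)
    (hσ : ∀ t ∈ Finset.Icc 1 T, σ t = 0)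
    (hηdef : ∀ t ∈ Finset.Icc 1 T, η t = 1 / (C * L) * Real.sqrt ((d : ℝ) / t))
    (K : Set (Fin d → ℝ))
    (hK : K = {v : Fin d → ℝ | ∀ t ∈ Finset.Icc 1 T, |v ⬝ᵥ x t| ≤ C})
    (f : ℕ → (Fin d → ℝ) → ℝ)
    (hf : ∀ t, ∀ v : Fin d → ℝ, f t v = ℓ t (v ⬝ᵥ x t))
    (w u g : ℕ → Fin d → ℝ)
    (hg : ∀ t, g t = deriv (ℓ t) (w t ⬝ᵥ x t) • x t)
    (hgne : ∀ t ∈ Finset.Icc 1 T, g t ≠ 0)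
    -- Curvature assumption
    (hcurv : ∀ t ∈ Finset.Icc 1 T, ∀ p ∈ K, ∀ q ∈ K,
      f t p + (deriv (ℓ t) (p ⬝ᵥ x t) • x t) ⬝ᵥ (q - p)
        + σ t / 2 * ((deriv (ℓ t) (p ⬝ᵥ x t) • x t) ⬝ᵥ (p - q)) ^ 2 ≤ f t q)
    (A : ℕ → Matrix (Fin d) (Fin d) ℝ)
    (hA : ∀ t, A t = ∑ s ∈ Finset.Icc 1 t, (σ s + η s) • Matrix.vecMulVec (g s) (g s))
    -- Moore–Penrose pseudoinverses of A_t
    (P : ℕ → Matrix (Fin d) (Fin d) ℝ)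
    (hP : ∀ t ∈ Finset.Icc 1 T,
      A t * P t * A t = A t ∧ P t * A t * P t = P t ∧
      (A t * P t)ᵀ = A t * P t ∧ (P t * A t)ᵀ = P t * A t)
    -- iterates
    (hw1 : w 1 = 0)
    (hu : ∀ t ∈ Finset.Icc 1 T, u (t + 1) = w t - (P t).mulVec (g t))
    (hproj : ∀ t ∈ Finset.Icc 1 T,
      |w (t + 1) ⬝ᵥ x (t + 1)| ≤ C ∧
      ∀ v : Fin d → ℝ, |v ⬝ᵥ x (t + 1)| ≤ C →
        Real.sqrt ((w (t + 1) - u (t + 1)) ⬝ᵥ (A t).mulVec (w (t + 1) - u (t + 1))) ≤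
          Real.sqrt ((v - u (t + 1)) ⬝ᵥ (A t).mulVec (v - u (t + 1))))
    -- λ* and r
    (Ahat : ℕ → Matrix (Fin d) (Fin d) ℝ)
    (hAhat : ∀ t, Ahat t = ∑ s ∈ Finset.Icc 1 t, Matrix.vecMulVec (g s) (g s))
    (hHerm : ∀ t, (Ahat t).IsHermitian)
    (lam : ℝ) (hlam : 0 < lam)
    (hlamlb : ∀ t ∈ Finset.Icc 1 T, ∀ i : Fin d,
      (hHerm t).eigenvalues i ≠ 0 → lam ≤ (hHerm t).eigenvalues i)
    (hlammin : ∃ t ∈ Finset.Icc 1 T, ∃ i : Fin d, (hHerm t).eigenvalues i = lam)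
    (r : ℕ) (hr : r = (Ahat T).rank) :
    ∀ wc ∈ K,
      ∑ t ∈ Finset.Icc 1 T, (f t (w t) - f t wc) ≤
        C * L / 2 * Real.sqrt ((T : ℝ) / d) *
          ((r : ℝ) + (1 + (r : ℝ)) * r / 2 *
            Real.log (1 + 2 * (∑ t ∈ Finset.Icc 1 T, g t ⬝ᵥ g t)
              / ((1 + (r : ℝ)) * r * lam)))
        + 4 * C * L * Real.sqrt ((T : ℝ) * d) := by
  intro wc hwc
  subst hK
  obtain ⟨t₀, ht₀, i₀, -⟩ := hlammin
  have hd : (0 : ℝ) < d := mod_cast i₀.pos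
  have hAη (t) (ht : t ∈ Icc 1 T) : A t = weightedGram η g t :=
    (hA t).trans (sum_congr rfl fun s hs ↦ by
      rw [hσ s (Icc_subset_Icc_right (mem_Icc.mp ht).2 hs), zero_add])
  obtain rfl : Ahat = weightedGram 1 g := funext fun t ↦ by simp [hAhat, weightedGram]
  have hregret := invariant_newton_convex_case_general hC hL hd hlam
    (fun t ht ↦ (hconv t ht).subset (Set.subset_univ _) (convex_Icc _ _))
    (fun t ht z _ ↦ hdiff t ht z) hLip hηdef (fun t _ ↦ hg t) ⟨t₀, ht₀, hgne t₀ ht₀⟩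
    (fun t ht ↦ hasSpectralGap_of_eigenvalues (hHerm t) (hlamlb t ht))
    (fun t ht ↦ hAη t ht ▸ (hP t ht).1) (by simp [hw1, hC.le]) hu
    (fun t ht ↦ hAη t (Ico_subset_Icc_self ht) ▸ hproj t (Ico_subset_Icc_self ht)) hwc
  simp only [hf]
  rw [hr]
  refine hregret.trans ?_
  gcongr _ * (_ + ?_) + _
  exact mul_log_div_le_mul_log_one_add_two_mul
    (sum_nonneg fun t _ ↦ dotProduct_self_star_nonneg (g t)) hlam
end

section
/- Let x, u, w ∈ R^d, y ∈ R and C > 0 satisfy |u^⊤ x| ≤ C, |w^⊤ x| ≤ C and |y| ≤ C. Define f(v) = (v^⊤ x − y)² for v ∈ R^d, so that ∇f(u) = 2(u^⊤ x − y)·x. Then f(w) ≥ f(u) + ∇f(u)^⊤ (w − u) + (1/(16C²))·(∇f(u)^⊤ (u − w))². In other words, the squared loss satisfies the Curvature assumption with σ = 1/(8C²). -/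
open Matrix

/-!
The squared loss of a linear functional `φ` is quadratic, so it exceeds its first-order expansion
at `u` by exactly `(φ (u - w)) ^ 2`. The derivative at `u` in the direction `u - w` is
`2 (φ u - y) φ (u - w)`, whose square is at most `4 R ^ 2` times that excess when `|φ u - y| ≤ R`.
If `|φ u|` and `|y|` are at most `C`, then `R = 2 C` will do, giving the constant `1 / (16 C ^ 2)`.
-/

section

variable {A E : Type*} [CommRing A] [AddCommGroup E] [Module A E]

theorem squared_loss_eq_first_order_add_sq (φ : Module.Dual A E) (u w : E) (y : A) :
    (φ w - y) ^ 2 =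
      (φ u - y) ^ 2 + ((2 * (φ u - y)) • φ) (w - u) + φ (u - w) ^ 2 := by
  simp only [LinearMap.smul_apply, map_sub, smul_eq_mul]
  ring

end

section

variable {𝕜 : Type*} [Field 𝕜] [LinearOrder 𝕜] [IsStrictOrderedRing 𝕜]

theorem one_div_four_mul_sq_mul_sq_le_sq_of_abs_le {r R : 𝕜} (hR : 0 < R) (hr : |r| ≤ R) (t : 𝕜) :
    1 / (4 * R ^ 2) * (2 * r * t) ^ 2 ≤ t ^ 2 := by
  have h_ratio : r ^ 2 / R ^ 2 ≤ 1 :=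
    div_le_one_of_le₀ (sq_le_sq.mpr (hr.trans (le_abs_self R))) (sq_nonneg R)
  calc
    1 / (4 * R ^ 2) * (2 * r * t) ^ 2 = r ^ 2 / R ^ 2 * t ^ 2 := by field
    _ ≤ t ^ 2 := mul_le_of_le_one_left (sq_nonneg t) h_ratio

theorem squared_loss_curvature_general {E : Type*} [AddCommGroup E] [Module 𝕜 E]
    (φ : Module.Dual 𝕜 E) (u w : E) (y R : 𝕜) (hR : 0 < R) (hu : |φ u - y| ≤ R) :
    (φ u - y) ^ 2 + ((2 * (φ u - y)) • φ) (w - u)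
        + 1 / (4 * R ^ 2) * ((2 * (φ u - y)) • φ) (u - w) ^ 2 ≤ (φ w - y) ^ 2 := by
  rw [squared_loss_eq_first_order_add_sq φ u w y]
  gcongr
  exact one_div_four_mul_sq_mul_sq_le_sq_of_abs_le hR hu (φ (u - w))

end

/-- **Squared loss satisfies the curvature assumption with `σ = 1/(8C²)`.** For
`|uᵀx| ≤ C`, `|wᵀx| ≤ C`, `|y| ≤ C`, the function `f(v) = (vᵀx − y)²`, whose gradient at
`u` is `2(uᵀx − y)·x`, satisfies
`f(w) ≥ f(u) + ∇f(u)ᵀ(w−u) + (1/(16C²))(∇f(u)ᵀ(u−w))²`. -/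
theorem squared_loss_curvature
    (d : ℕ) (x u w : Fin d → ℝ) (y C : ℝ) (hC : 0 < C)
    (hu : |u ⬝ᵥ x| ≤ C) (hw : |w ⬝ᵥ x| ≤ C) (hy : |y| ≤ C)
    (f : (Fin d → ℝ) → ℝ) (hf : ∀ v : Fin d → ℝ, f v = (v ⬝ᵥ x - y) ^ 2) :
    f u + (2 * (u ⬝ᵥ x - y)) • x ⬝ᵥ (w - u)
        + 1 / (16 * C ^ 2) * ((2 * (u ⬝ᵥ x - y)) • x ⬝ᵥ (u - w)) ^ 2 ≤ f w := by
  have h_residual : |x ⬝ᵥ u - y| ≤ 2 * C := by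
    rw [dotProduct_comm]
    linarith [abs_sub (u ⬝ᵥ x) y]
  rw [show 16 * C ^ 2 = 4 * (2 * C) ^ 2 by ring]
  simpa only [hf, dotProduct_comm _ x, smul_dotProduct, LinearMap.smul_apply,
      dotProductEquiv_apply_apply] using
    squared_loss_curvature_general (dotProductEquiv ℝ (Fin d) x) u w y (2 * C) (by positivity)
      h_residual
end
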